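/- For every nonnegative integer n, the number sT(5n+4) of partition pairs (π₁,π₂) ∈ 𝒮𝒯 with |π₁|+|π₂| = 5n+4 is divisible by 5. -/

import Mathlib

open scoped BigOperators

noncomputable section

/-- A partition is a finite multiset of positive integers. -/
def IsPartition (π : Multiset ℕ) : Prop := ∀ x ∈ π, 0 < x

/-- The smallest part of a partition, with the convention `s(∅) = ∞`. -/
def sPart (π : Multiset ℕ) : ℕ∞ := (π.map (fun x => (x : ℕ∞))).inf

/-- The largest part of a partition, with the convention `ℓ(∅) = 0`. -/
def lPart (π : Multiset ℕ) : ℕ := π.sup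

/-- Membership in the set 𝒮𝒯 of partition pairs: π₁ is nonempty,
`s(π₁) ≤ s(π₂)`, and `ℓ(π₂) < 2·s(π₁)`. -/
def InST (p : Multiset ℕ × Multiset ℕ) : Prop :=
  IsPartition p.1 ∧ IsPartition p.2 ∧ p.1 ≠ 0 ∧
    sPart p.1 ≤ sPart p.2 ∧ (lPart p.2 : ℕ∞) < 2 * sPart p.1

/-- `sT n` is the number of pairs `(π₁, π₂) ∈ 𝒮𝒯` with `|π₁| + |π₂| = n`. -/
def sT (n : ℕ) : ℕ :=
  {p : Multiset ℕ × Multiset ℕ | InST p ∧ p.1.sum + p.2.sum = n}.ncard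

open PowerSeries Finset Filter
open scoped PowerSeries.WithPiTopology Topology

namespace ST5

abbrev K := PowerSeries (ZMod 5)

instance factPrimeFive : Fact (Nat.Prime 5) := ⟨by norm_num⟩

lemma summ {ι : Type*} (f : ι → K) (w : ι → ℕ) (hw : ∀ N, {i | w i ≤ N}.Finite)
    (h : ∀ i, (X : K) ^ (w i) ∣ f i) : Summable f := by
  rw [PowerSeries.WithPiTopology.summable_iff_summable_coeff]
  intro d
  apply summable_of_hasFiniteSupport
  refine (hw d).subset ?_
  intro i hi
  by_contra hlt
  apply hi
  exact (PowerSeries.X_pow_dvd_iff.mp (h i)) d (by simpa using hlt)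

lemma summN (f : ℕ → K) (h : ∀ i, (X : K) ^ i ∣ f i) : Summable f :=
  summ f id (fun N => Set.finite_le_nat N) h

lemma summNN (f : ℕ × ℕ → K) (h : ∀ i j, (X : K) ^ (i + j) ∣ f (i, j)) : Summable f := by
  refine summ f (fun p => p.1 + p.2) (fun N => ?_) (fun p => h p.1 p.2)
  refine ((Set.finite_le_nat N).prod (Set.finite_le_nat N)).subset ?_
  rintro ⟨a, b⟩ hab
  simp only [Set.mem_ofPred_eq] at hab
  simp only [Set.mem_prod, Set.mem_ofPred_eq]
  omega

lemma summZ (f : ℤ → K) (h : ∀ i, (X : K) ^ (i.natAbs) ∣ f i) : Summable f := by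
  refine summ f Int.natAbs (fun N => ?_) h
  refine (Set.finite_Icc (-(N : ℤ)) N).subset ?_
  intro i hi
  simp only [Set.mem_ofPred_eq] at hi
  simp only [Set.mem_Icc]
  omega

lemma swap (f : ℕ → ℕ → K) (h : ∀ i j, (X : K) ^ (i + j) ∣ f i j) :
    ∑' i, ∑' j, f i j = ∑' j, ∑' i, f i j := by
  symm
  apply Summable.tsum_comm' (f := f)
  · exact summNN _ (fun i j => h i j)
  · intro b
    exact summN _ fun i => (pow_dvd_pow _ (Nat.le_add_left i b)).trans (h b i)
  · intro b
    exact summN _ fun i => (pow_dvd_pow _ (Nat.le_add_right i b)).trans (h i b)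

lemma dvd_tsum {ι : Type*} (f : ι → K) (n : ℕ) (h : ∀ i, (X : K) ^ n ∣ f i) :
    (X : K) ^ n ∣ ∑' i, f i := by
  by_cases hs : Summable f
  · rw [PowerSeries.X_pow_dvd_iff]
    intro m hm
    have := (PowerSeries.WithPiTopology.hasSum_iff_hasSum_coeff (ZMod 5)).mp hs.hasSum m
    rw [← this.tsum_eq]
    simp [fun i => (PowerSeries.X_pow_dvd_iff.mp (h i)) m hm]
  · rw [tsum_eq_zero_of_not_summable hs]; exact dvd_zero _

lemma tendsto_of_dvd (f : ℕ → K) (g : K) (h : ∀ n, (X : K) ^ n ∣ f n - g) :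
    Tendsto f atTop (𝓝 g) := by
  rw [PowerSeries.WithPiTopology.tendsto_iff_coeff_tendsto]
  intro d
  refine tendsto_nhds_of_eventually_eq ?_
  filter_upwards [eventually_gt_atTop d] with n hn
  have := (PowerSeries.X_pow_dvd_iff.mp (h n)) d hn
  rwa [map_sub, sub_eq_zero] at this

lemma eq_of_dvd (f g : K) (h : ∀ n, (X : K) ^ n ∣ f - g) : f = g := by
  rw [← sub_eq_zero]
  ext d
  exact (PowerSeries.X_pow_dvd_iff.mp (h (d + 1))) d (by omega)

lemma coeff_tsum' {ι : Type*} (f : ι → K) (hs : Summable f) (d : ℕ) :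
    coeff d (∑' i, f i) = ∑' i, coeff d (f i) :=
  ((PowerSeries.WithPiTopology.hasSum_iff_hasSum_coeff (ZMod 5)).mp hs.hasSum d).tsum_eq.symm

/-- Expansion `q ↦ q³`. -/
def phi : K →ₐ[ZMod 5] K := PowerSeries.expand 3 (by norm_num)

lemma phi_X : phi X = X ^ 3 := PowerSeries.expand_X _ _

lemma continuous_phi : Continuous phi := by
  have : ∀ d, Continuous fun f : K => coeff d (phi f) := by
    intro d
    unfold phi
    simp only [PowerSeries.coeff_expand]
    split_ifs
    · exact PowerSeries.WithPiTopology.continuous_coeff (ZMod 5) _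
    · exact continuous_const
  rw [continuous_iff_continuousAt]
  intro f
  unfold ContinuousAt
  rw [PowerSeries.WithPiTopology.tendsto_iff_coeff_tendsto]
  intro d
  exact (this d).tendsto f

lemma phi_tsum {ι : Type*} (f : ι → K) (hs : Summable f) :
    phi (∑' i, f i) = ∑' i, phi (f i) :=
  hs.map_tsum phi continuous_phi

lemma phi_dvd (f : K) (n : ℕ) (h : X ^ n ∣ f) : X ^ (3 * n) ∣ phi f := by
  obtain ⟨g, rfl⟩ := h
  rw [map_mul, map_pow, phi_X, ← pow_mul]
  exact dvd_mul_right _ _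

/-! ### q-Pochhammer symbols -/

def P (n : ℕ) : K := ∏ i ∈ range n, (1 - X ^ (i + 1))

def R (n : ℕ) : K := ∏ i ∈ range n, (1 - X ^ (i + 1) : K)⁻¹

lemma one_sub_inv (n : ℕ) : (1 - X ^ (n + 1) : K) * (1 - X ^ (n + 1) : K)⁻¹ = 1 := by
  apply PowerSeries.mul_inv_cancel
  simp

lemma P_zero : P 0 = 1 := by simp [P]
lemma R_zero : R 0 = 1 := by simp [R]
lemma P_succ (n : ℕ) : P (n + 1) = P n * (1 - X ^ (n + 1)) := by simp [P, prod_range_succ]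
lemma R_succ (n : ℕ) : R n = (1 - X ^ (n + 1)) * R (n + 1) := by
  unfold R
  rw [prod_range_succ]
  linear_combination (-(∏ i ∈ range n, (1 - X ^ (i + 1) : K)⁻¹)) * one_sub_inv n

lemma P_mul_R (n : ℕ) : P n * R n = 1 := by
  unfold P R
  rw [← prod_mul_distrib]
  exact prod_eq_one fun i _ => one_sub_inv i

def E : K := pentagonalSeries (ZMod 5)

lemma P_diff (n m : ℕ) : (X : K) ^ (n + 1) ∣ P (n + m) - P n := by
  induction m with
  | zero => simp
  | succ m ih =>
    rw [← add_assoc, P_succ]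
    have : P (n + m) * (1 - X ^ (n + m + 1)) - P n
      = (P (n + m) - P n) - X ^ (n + 1) * (X ^ m * P (n + m)) := by ring
    rw [this]
    exact dvd_sub ih (dvd_mul_right _ _)

lemma tendsto_P : Tendsto P atTop (𝓝 E) :=
  (PowerSeries.WithPiTopology.hasProd_one_sub_X_pow (ZMod 5)).tendsto_prod_nat

lemma P_sub_E (n : ℕ) : (X : K) ^ (n + 1) ∣ P n - E := by
  rw [PowerSeries.X_pow_dvd_iff]
  intro d hd
  have h1 := (PowerSeries.WithPiTopology.tendsto_iff_coeff_tendsto (ZMod 5) _ _ _).mp tendsto_P d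
  have h2 : Tendsto (fun i => coeff d (P i)) atTop (𝓝 (coeff d (P n))) := by
    refine tendsto_nhds_of_eventually_eq ?_
    filter_upwards [eventually_ge_atTop n] with m hm
    obtain ⟨k, rfl⟩ := Nat.exists_eq_add_of_le hm
    have := (PowerSeries.X_pow_dvd_iff.mp (P_diff n k)) d hd
    rwa [map_sub, sub_eq_zero] at this
  rw [map_sub, sub_eq_zero]
  exact tendsto_nhds_unique h2 h1

lemma E_const : constantCoeff E = 1 := by
  have := (PowerSeries.X_pow_dvd_iff.mp (P_sub_E 0)) 0 (by norm_num)
  rw [P_zero, map_sub, sub_eq_zero] at this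
  simpa using this.symm

def Ri : K := E⁻¹

lemma E_mul_Ri : E * Ri = 1 := PowerSeries.mul_inv_cancel _ (by rw [E_const]; exact one_ne_zero)

lemma R_sub_Ri (n : ℕ) : (X : K) ^ (n + 1) ∣ R n - Ri := by
  have : R n - Ri = - (R n * Ri) * (P n - E) := by
    linear_combination (-R n) * E_mul_Ri + Ri * P_mul_R n
  rw [this]
  exact (P_sub_E n).mul_left _

lemma E_ne_zero : E ≠ 0 := by
  intro h
  have := E_const
  rw [h] at this
  simp at this

lemma P_ne_zero (n : ℕ) : P n ≠ 0 := fun h => by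
  have := P_mul_R n
  rw [h] at this
  simp at this


lemma tsum_eq_of_partial (f : ℕ → K) (g : K) (hf : ∀ i, (X : K) ^ i ∣ f i)
    (h : ∀ n, (X : K) ^ n ∣ (∑ i ∈ range n, f i) - g) : ∑' i, f i = g :=
  tendsto_nhds_unique (summN f hf).hasSum.tendsto_sum_nat (tendsto_of_dvd _ _ h)

def T : ℕ → ℕ
  | 0 => 0
  | n + 1 => T n + (n + 1)

lemma T_zero : T 0 = 0 := rfl
lemma T_succ (n : ℕ) : T (n + 1) = T n + (n + 1) := rfl
lemma le_T (n : ℕ) : n ≤ T n := by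
  cases n with
  | zero => simp
  | succ n => rw [T_succ]; omega
lemma two_T (n : ℕ) : 2 * T n = n * (n + 1) := by
  induction n with
  | zero => rfl
  | succ n ih => rw [T_succ]; linarith

/-- `Φ_c`. -/
def Phi (c : ℕ) : K := ∑' i, X ^ i * R i * R (i + c)

lemma Phi_summable (c : ℕ) : Summable fun i => (X ^ i * R i * R (i + c) : K) :=
  summN _ fun i => by rw [mul_assoc]; exact dvd_mul_right _ _

lemma Phi_rec (c : ℕ) : Phi c + X ^ (c + 1) * Phi (c + 1) = Ri ^ 2 := by
  unfold Phi
  rw [← (Phi_summable (c + 1)).tsum_mul_left, ← (Phi_summable c).tsum_add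
    ((Phi_summable (c + 1)).mul_left _)]
  have hpart : ∀ n, ∑ i ∈ range (n + 1),
      (X ^ i * R i * R (i + c) + X ^ (c + 1) * (X ^ i * R i * R (i + (c + 1))) : K)
      = R n * R (n + c + 1) := by
    intro n
    induction n with
    | zero =>
      simp only [zero_add, sum_range_one, pow_zero, R_zero]
      rw [R_succ c]; ring
    | succ n ih =>
      rw [sum_range_succ, ih, R_succ n, show n + 1 + c = n + c + 1 by ring,
        show n + 1 + (c + 1) = n + c + 2 by ring, R_succ (n + c + 1)]
      ring
  apply tsum_eq_of_partial
  · intro i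
    exact dvd_add (by rw [mul_assoc]; exact dvd_mul_right _ _)
      (Dvd.dvd.mul_left (by rw [mul_assoc]; exact dvd_mul_right _ _) _)
  · intro n
    cases n with
    | zero => simp
    | succ n =>
      rw [hpart]
      have : R n * R (n + c + 1) - Ri ^ 2 = (R n - Ri) * R (n + c + 1)
        + (R (n + c + 1) - Ri) * Ri := by ring
      rw [this]
      exact dvd_add ((R_sub_Ri n).mul_right _)
        (((pow_dvd_pow _ (by omega)).trans (R_sub_Ri (n + c + 1))).mul_right _)

/-- `a_c`. -/
def aa (c : ℕ) : K := ∑' j, (-1) ^ j * X ^ (T j + c * j)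

lemma aa_dvd (c j : ℕ) : (X : K) ^ j ∣ (-1) ^ j * X ^ (T j + c * j) :=
  Dvd.dvd.mul_left (pow_dvd_pow _ ((le_T j).trans (Nat.le_add_right _ _))) _

lemma aa_summable (c : ℕ) : Summable fun j => ((-1) ^ j * X ^ (T j + c * j) : K) :=
  summN _ (aa_dvd c)

lemma aa_rec (c : ℕ) : aa c + X ^ (c + 1) * aa (c + 1) = 1 := by
  unfold aa
  rw [(aa_summable c).tsum_eq_zero_add, ← (aa_summable (c + 1)).tsum_mul_left]
  have : ∀ j, ((-1) ^ (j + 1) * X ^ (T (j + 1) + c * (j + 1)) : K) =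
    - (X ^ (c + 1) * ((-1) ^ j * X ^ (T j + (c + 1) * j))) := by
    intro j
    rw [T_succ]; ring
  simp only [this, tsum_neg]
  simp [T_zero]

lemma E2_Phi (c : ℕ) : E ^ 2 * Phi c = aa c := by
  apply eq_of_dvd
  intro n
  induction n generalizing c with
  | zero => simp
  | succ n ih =>
    have h1 := Phi_rec c
    have h2 := aa_rec c
    have : E ^ 2 * Phi c - aa c = X * (X ^ c * (-(E ^ 2 * Phi (c + 1) - aa (c + 1)))) := by
      linear_combination E ^ 2 * h1 - h2 + (E * Ri + 1) * E_mul_Ri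
    rw [this, pow_succ']
    exact mul_dvd_mul_left _ (Dvd.dvd.mul_left (dvd_neg.mpr (ih _)) _)

/-! ### Finite Jacobi identity -/

def Rs (m s : ℕ) : K := if s ≤ m then R (m - s) else 0

lemma Rs_of_gt {m s : ℕ} (h : m < s) : Rs m s = 0 := by simp [Rs, h]
lemma Rs_add (s i : ℕ) : Rs (i + s) s = R i := by simp [Rs]

def bb (m s : ℕ) : K := (-1) ^ s * X ^ T s * Rs m s * R (m + s + 1)

lemma bb_rec (m s : ℕ) : (1 - X ^ (2 * m + 2)) * (1 - X ^ (2 * m + 3)) * bb (m + 1) (s + 1)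
    = (1 + X ^ (2 * m + 2)) * bb m (s + 1) - X ^ (m + 1) * (bb m s + bb m (s + 2)) := by
  unfold bb
  rw [T_succ (s + 1), T_succ s]
  rcases lt_trichotomy s m with h | h | h
  · -- s < m
    obtain ⟨k, rfl⟩ := Nat.exists_eq_add_of_lt h
    have e1 : Rs (s + k + 1 + 1) (s + 1) = R (k + 1) := by
      rw [show s + k + 1 + 1 = (k + 1) + (s + 1) by ring, Rs_add]
    have e2 : Rs (s + k + 1) (s + 1) = R k := by
      rw [show s + k + 1 = k + (s + 1) by ring, Rs_add]
    have e3 : Rs (s + k + 1) s = R (k + 1) := by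
      rw [show s + k + 1 = (k + 1) + s by ring, Rs_add]
    have e4 : Rs (s + k + 1) (s + 2) = (1 - X ^ k) * R k := by
      cases k with
      | zero => rw [Rs_of_gt (by omega)]; simp
      | succ k =>
        rw [show s + (k + 1) + 1 = k + (s + 2) by ring, Rs_add, R_succ]
    rw [e1, e2, e3, e4, R_succ k]
    have f1 : R (s + k + 1 + 1 + (s + 1) + 1) = R (2 * s + k + 4) := by congr 1; ring
    have f2 : R (s + k + 1 + (s + 1) + 1) = (1 - X ^ (2 * s + k + 4)) * R (2 * s + k + 4) := by
      rw [← R_succ]; congr 1; ring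
    have f3 : R (s + k + 1 + s + 1) = (1 - X ^ (2 * s + k + 3)) *
      ((1 - X ^ (2 * s + k + 4)) * R (2 * s + k + 4)) := by
      rw [← R_succ, ← R_succ]; congr 1; ring
    have f4 : R (s + k + 1 + (s + 2) + 1) = R (2 * s + k + 4) := by congr 1; ring
    rw [f1, f2, f3, f4]
    ring
  · subst h
    have e1 : Rs (s + 1) (s + 1) = 1 := by simp [Rs, R_zero]
    have e3 : Rs s s = 1 := by simp [Rs, R_zero]
    rw [e1, e3, Rs_of_gt (show s < s + 1 by omega), Rs_of_gt (show s < s + 2 by omega)]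
    have f3 : R (s + s + 1) = (1 - X ^ (2 * s + 2)) *
      ((1 - X ^ (2 * s + 3)) * R (2 * s + 3)) := by
      rw [← R_succ, ← R_succ]; congr 1; ring
    have f1 : R (s + 1 + (s + 1) + 1) = R (2 * s + 3) := by congr 1; ring
    rw [f1, f3]
    ring
  · rw [Rs_of_gt (show m + 1 < s + 1 by omega), Rs_of_gt (show m < s + 1 by omega),
      Rs_of_gt (show m < s + 2 by omega), Rs_of_gt h]
    ring

lemma bb_rec_zero (m : ℕ) : (1 - X ^ (2 * m + 2)) * (1 - X ^ (2 * m + 3)) * bb (m + 1) 0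
    = (1 + X ^ (2 * m + 2)) * bb m 0 - X ^ (m + 1) * (- bb m 0 + bb m 1) := by
  unfold bb
  have e1 : Rs (m + 1) 0 = R (m + 1) := by simp [Rs]
  have e2 : Rs m 0 = R m := by simp [Rs]
  have e4 : Rs m 1 = (1 - X ^ m) * R m := by
    cases m with
    | zero => rw [Rs_of_gt (by omega)]; simp
    | succ m => rw [Rs_add 1 m, R_succ]
  rw [e1, e2, e4, T_succ, T_zero]
  simp only [add_zero]
  rw [R_succ m, R_succ (m + 1)]
  ring

lemma weight_sum (b : ℕ → K) (N : ℕ) :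
    (-b 0 + b 1) + ∑ s ∈ range N, (2 * ((s + 1 : ℕ) : K) + 1) * (b s + b (s + 2))
    = 2 * ∑ s ∈ range (N + 1), (2 * (s : K) + 1) * b s
      + (2 * (N : K) + 1) * b (N + 1) - (2 * (N : K) + 3) * b N := by
  induction N with
  | zero => simp; ring
  | succ N ih =>
    rw [sum_range_succ, ← add_assoc, ih, sum_range_succ _ (N + 1)]
    push_cast
    ring

def BB (m : ℕ) : K := ∑ s ∈ range (m + 1), (2 * (s : K) + 1) * bb m s

lemma bb_gt {m s : ℕ} (h : m < s) : bb m s = 0 := by simp [bb, Rs_of_gt h]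

lemma BB_rec (m : ℕ) : (1 - X ^ (2 * m + 2)) * (1 - X ^ (2 * m + 3)) * BB (m + 1)
    = (1 - X ^ (m + 1)) ^ 2 * BB m := by
  unfold BB
  have hw := weight_sum (bb m) (m + 1)
  rw [bb_gt (show m < m + 1 by omega), bb_gt (show m < m + 1 + 1 by omega),
    sum_range_succ _ (m + 1), bb_gt (show m < m + 1 by omega)] at hw
  have hl := sum_range_succ' (fun s => (2 * (s : K) + 1) * bb m s) (m + 1)
  rw [sum_range_succ, bb_gt (show m < m + 1 by omega)] at hl
  rw [sum_range_succ', mul_add, mul_sum]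
  have : ∀ s ∈ range (m + 1), (1 - X ^ (2 * m + 2)) * (1 - X ^ (2 * m + 3)) *
      ((2 * ((s + 1 : ℕ) : K) + 1) * bb (m + 1) (s + 1))
      = (1 + X ^ (2 * m + 2)) * ((2 * ((s + 1 : ℕ) : K) + 1) * bb m (s + 1))
        - X ^ (m + 1) * ((2 * ((s + 1 : ℕ) : K) + 1) * (bb m s + bb m (s + 2))) := by
    intro s _
    linear_combination (2 * ((s + 1 : ℕ) : K) + 1) * bb_rec m s
  rw [sum_congr rfl this, sum_sub_distrib, ← mul_sum, ← mul_sum]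
  have h0 := bb_rec_zero m
  simp only [Nat.cast_zero, mul_zero, zero_add, one_mul, add_zero, sub_zero] at *
  linear_combination h0 - (1 + X ^ (2 * m + 2)) * hl - X ^ (m + 1) * hw

lemma BB_eq (m : ℕ) : BB m = P m ^ 2 * R (2 * m + 1) := by
  induction m with
  | zero =>
    simp [BB, bb, T_zero, Rs, R_zero, P_zero]
  | succ m ih =>
    have h1 := BB_rec m
    rw [ih, R_succ (2 * m + 1), R_succ (2 * m + 1 + 1)] at h1
    have hne : (1 - X ^ (2 * m + 2) : K) * (1 - X ^ (2 * m + 3)) ≠ 0 := by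
      apply mul_ne_zero <;>
      · intro h
        have := congrArg (constantCoeff (R := ZMod 5)) h
        simp at this
    apply mul_left_cancel₀ hne
    rw [h1, P_succ, show 2 * (m + 1) + 1 = 2 * m + 1 + 1 + 1 by ring]
    ring

/-- Jacobi's identity for the cube of Euler's product. -/
lemma jacobi : E ^ 3 = ∑' s : ℕ, (-1) ^ s * (2 * (s : K) + 1) * X ^ T s := by
  symm
  apply tsum_eq_of_partial
  · intro i
    exact Dvd.dvd.mul_left (pow_dvd_pow _ (le_T i)) _
  · intro n
    cases n with
    | zero => simp
    | succ m =>
    have h := BB_eq m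
    have h2 : (X : K) ^ (m + 1) ∣ Ri ^ 2 * ∑ s ∈ range (m + 1),
        ((-1) ^ s * (2 * (s : K) + 1) * X ^ T s) - BB m := by
      unfold BB
      rw [mul_sum, ← sum_sub_distrib]
      apply dvd_sum
      intro s hs
      rw [mem_range] at hs
      obtain ⟨i, rfl⟩ := Nat.exists_eq_add_of_le (Nat.lt_succ_iff.mp hs)
      unfold bb
      rw [add_comm s i, Rs_add]
      have e : Ri ^ 2 * ((-1) ^ s * (2 * (s : K) + 1) * X ^ T s) -
        (2 * (s : K) + 1) * ((-1) ^ s * X ^ T s * R i * R (i + s + s + 1))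
        = (-(-1) ^ s * (2 * (s : K) + 1)) *
          (X ^ T s * ((R i - Ri) * R (i + s + s + 1) + (R (i + s + s + 1) - Ri) * Ri)) := by ring
      rw [e]
      apply Dvd.dvd.mul_left
      have : (X : K) ^ (i + s + 1) ∣ X ^ T s * X ^ (i + 1) := by
        rw [← pow_add]; exact pow_dvd_pow _ (by have := le_T s; omega)
      refine this.trans (mul_dvd_mul_left _ (dvd_add ((R_sub_Ri i).mul_right _) ?_))
      exact ((pow_dvd_pow _ (by omega)).trans (R_sub_Ri (i + s + s + 1))).mul_right _
    have h3 : (X : K) ^ (m + 1) ∣ BB m - E := by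
      rw [h]
      have e : P m ^ 2 * R (2 * m + 1) - E = (P m - E) * (P m + E) * R (2 * m + 1)
        + E ^ 2 * (R (2 * m + 1) - Ri) := by linear_combination E * E_mul_Ri
      rw [e]
      exact dvd_add ((P_sub_E m).mul_right _ |>.mul_right _)
        (((pow_dvd_pow _ (by omega)).trans (R_sub_Ri (2 * m + 1))).mul_left _)
    have h4 := (dvd_add h2 h3).mul_left (E ^ 2)
    convert h4 using 1
    linear_combination (-(∑ s ∈ range (m + 1),
        ((-1) ^ s * (2 * (s : K) + 1) * X ^ T s)) * (E * Ri + 1)) * E_mul_Ri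


def Y (a m : ℕ) : K := ∏ i ∈ range m, (1 - X ^ (a + i))

lemma Y_zero (a : ℕ) : Y a 0 = 1 := by simp [Y]
lemma Y_succ (a m : ℕ) : Y a (m + 1) = Y a m * (1 - X ^ (a + m)) := by
  simp [Y, prod_range_succ]
lemma Y_succ' (a m : ℕ) : Y a (m + 1) = (1 - X ^ a) * Y (a + 1) m := by
  simp only [Y, prod_range_succ', add_zero]
  rw [mul_comm]
  congr 1
  apply prod_congr rfl
  intro i _
  rw [show a + (i + 1) = a + 1 + i by ring]
lemma P_add (n m : ℕ) : P (n + m) = P n * Y (n + 1) m := by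
  induction m with
  | zero => simp [Y_zero]
  | succ m ih => rw [← add_assoc, P_succ, ih, Y_succ, show n + 1 + m = n + m + 1 by ring]; ring

def LL (a m : ℕ) : K := ∑' k, X ^ (k * (a + 1)) * Y (k + 1) m

lemma LL_summable (a m : ℕ) : Summable fun k => (X ^ (k * (a + 1)) * Y (k + 1) m : K) :=
  summN _ fun i => Dvd.dvd.mul_right (pow_dvd_pow _ (by nlinarith)) _

lemma LL_rec (a m : ℕ) : LL a (m + 1) = LL a m - X ^ (m + 1) * LL (a + 1) m := by
  unfold LL
  rw [← (LL_summable (a + 1) m).tsum_mul_left, ← (LL_summable a m).tsum_sub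
    ((LL_summable (a + 1) m).mul_left _)]
  congr 1
  ext1 k
  rw [Y_succ]
  ring

lemma LL_eq (a m : ℕ) : LL a m * Y (a + 1) (m + 1) = P m := by
  induction m generalizing a with
  | zero =>
    unfold LL
    simp only [Y_zero, Y_succ, P_zero, mul_one, one_mul, add_zero]
    have := PowerSeries.WithPiTopology.tsum_pow_mul_one_sub_of_constantCoeff_eq_zero
      (f := (X ^ (a + 1) : K)) (by simp)
    rw [← this]
    congr 2
    ext1 k
    rw [← pow_mul, mul_comm]
  | succ m ih =>
    have h1 := ih a
    have h2 := ih (a + 1)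
    rw [LL_rec, P_succ]
    have e1 := Y_succ (a + 1) (m + 1)
    have e2 := Y_succ' (a + 1) (m + 1)
    calc _ = LL a m * Y (a + 1) (m + 1 + 1) - X ^ (m + 1) * LL (a + 1) m * Y (a + 1) (m + 1 + 1) := by
          ring
      _ = LL a m * (Y (a + 1) (m + 1) * (1 - X ^ (a + 1 + (m + 1))))
          - X ^ (m + 1) * LL (a + 1) m * ((1 - X ^ (a + 1)) * Y (a + 1 + 1) (m + 1)) := by
          rw [← e1, ← e2]
      _ = _ := by linear_combination (1 - X ^ (a + 1 + (m + 1))) * h1 -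
                    X ^ (m + 1) * (1 - X ^ (a + 1)) * h2

lemma LL_diag (m : ℕ) : LL m m = P m ^ 2 * R (2 * m + 1) := by
  have h1 := LL_eq m m
  have h2 := P_add m (m + 1)
  have h3 := P_mul_R (2 * m + 1)
  rw [show 2 * m + 1 = m + (m + 1) by ring] at *
  rw [h2] at h3
  linear_combination (-LL m m) * h3 + P m * R (m + (m + 1)) * h1

def DD : K := ∑' m, X ^ (m + 1) * (P m ^ 2 * R (2 * m + 1))

lemma DD_summable : Summable fun m => (X ^ (m + 1) * (P m ^ 2 * R (2 * m + 1)) : K) :=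
  summN _ fun i => Dvd.dvd.mul_right (pow_dvd_pow _ (by omega)) _

def gg (r : ℕ) : K := ∑' m, X ^ ((r + 1) * (m + 1)) * Y (r + 1) m

lemma gg_summable (r : ℕ) : Summable fun m => (X ^ ((r + 1) * (m + 1)) * Y (r + 1) m : K) :=
  summN _ fun i => Dvd.dvd.mul_right (pow_dvd_pow _ (by nlinarith)) _

lemma gg_dvd (r : ℕ) : (X : K) ^ (r + 1) ∣ gg r :=
  dvd_tsum _ _ fun i => Dvd.dvd.mul_right (pow_dvd_pow _ (by nlinarith)) _

lemma DD_eq_gg : DD = ∑' r, gg r := by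
  unfold DD gg
  rw [← swap]
  · congr 1
    ext1 m
    rw [← LL_diag]
    unfold LL
    rw [← (LL_summable m m).tsum_mul_left]
    congr 1
    ext1 k
    ring
  · intro i j
    exact Dvd.dvd.mul_right (pow_dvd_pow _ (by nlinarith)) _

def psi (k : ℕ) : K := X ^ k + X ^ (2 * k)

lemma gg_rec (r : ℕ) : gg r = psi (r + 1) - X ^ (3 * (r + 1)) * gg (r + 1) := by
  -- `h = ∑ y^m (yq)_{m+1}`
  set y : K := X ^ (r + 1) with hy
  have hs0 : Summable fun m => (y ^ m * Y (r + 2) m : K) := summN _ fun i =>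
    Dvd.dvd.mul_right (by rw [hy, ← pow_mul]; exact pow_dvd_pow _ (by nlinarith)) _
  have hs1 : Summable fun m => (y ^ m * Y (r + 2) (m + 1) : K) := summN _ fun i =>
    Dvd.dvd.mul_right (by rw [hy, ← pow_mul]; exact pow_dvd_pow _ (by nlinarith)) _
  have hA : ∑' m, (y ^ m * Y (r + 2) m : K) = 1 + y * ∑' m, y ^ m * Y (r + 2) (m + 1) := by
    rw [hs0.tsum_eq_zero_add, ← hs1.tsum_mul_left]
    simp only [pow_zero, Y_zero, one_mul]
    congr 2
    ext1 m
    ring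
  have hB : gg (r + 1) = ∑' m, (y ^ m * Y (r + 2) m : K) - ∑' m, y ^ m * Y (r + 2) (m + 1) := by
    unfold gg
    rw [← hs0.tsum_sub hs1]
    congr 1
    ext1 m
    rw [Y_succ, hy]
    ring
  have hC : gg r = y + (1 - y) * y ^ 2 * ∑' m, (y ^ m * Y (r + 2) m : K) := by
    unfold gg
    rw [(gg_summable r).tsum_eq_zero_add, ← hs0.tsum_mul_left]
    simp only [Y_zero, zero_add, mul_one]
    congr 2
    ext1 m
    rw [Y_succ', hy]
    ring
  have e1 : psi (r + 1) = y + y ^ 2 := by rw [psi, hy]; ring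
  have e2 : (X : K) ^ (3 * (r + 1)) = y ^ 3 := by rw [hy]; ring
  rw [e1, e2, hC, hB, hA]
  ring

def sig : ℕ → K
  | 0 => 0
  | n + 1 => 1 - X ^ n * sig n

lemma sig_succ (n : ℕ) : sig (n + 1) = 1 - X ^ n * sig n := rfl

lemma DD_eq_sig : DD = ∑' k, phi (sig (k + 1)) * psi (k + 1) := by
  rw [DD_eq_gg]
  have hsg : Summable gg := summN _ fun i => (pow_dvd_pow _ (by omega)).trans (gg_dvd i)
  have h1 : Summable fun k => phi (sig (k + 1)) * gg k := summN _ fun i =>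
    ((pow_dvd_pow _ (by omega)).trans (gg_dvd i)).mul_left _
  have h2 : Summable fun k => phi (sig k) * (X ^ (3 * k) * gg k) := summN _ fun i =>
    (((pow_dvd_pow _ (by omega)).trans (gg_dvd i)).mul_left _).mul_left _
  have h3 : ∑' k, phi (sig k) * (X ^ (3 * k) * gg k)
    = ∑' k, phi (sig (k + 1)) * (X ^ (3 * (k + 1)) * gg (k + 1)) := by
    rw [h2.tsum_eq_zero_add]
    simp [sig]
  have h4 : ∑' k, phi (sig (k + 1)) * psi (k + 1) = ∑' k, phi (sig (k + 1)) * gg k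
     + ∑' k, phi (sig (k + 1)) * (X ^ (3 * (k + 1)) * gg (k + 1)) := by
    rw [← h1.tsum_add ((summable_nat_add_iff 1).mpr h2)]
    congr 1
    ext1 k
    linear_combination (- phi (sig (k + 1))) * gg_rec k
  rw [h4, ← h3, ← h1.tsum_add h2]
  congr 1
  ext1 k
  rw [sig_succ, map_sub, map_mul, map_pow, phi_X, map_one]
  ring

lemma DD_E2 : DD * E ^ 2 = ∑' s : ℕ, (-1) ^ s * (2 * (s : K) + 1) * X ^ (T s + s + 1) * aa (2 * s + 1) := by
  have hdvd : ∀ m s : ℕ, (X : K) ^ (m + s) ∣ X ^ (m + 1) * ((2 * (s : K) + 1) * bb m s) := by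
    intro m s
    unfold bb
    have : (X ^ (m + 1) * ((2 * (s : K) + 1) * ((-1) ^ s * X ^ T s * Rs m s * R (m + s + 1))))
      = X ^ (m + 1 + T s) * ((2 * (s : K) + 1) * ((-1) ^ s * Rs m s * R (m + s + 1))) := by ring
    rw [this]
    exact Dvd.dvd.mul_right (pow_dvd_pow _ (by have := le_T s; omega)) _
  have h1 : DD = ∑' m : ℕ, ∑' s : ℕ, X ^ (m + 1) * ((2 * (s : K) + 1) * bb m s) := by
    unfold DD
    congr 1
    ext1 m
    rw [← BB_eq, tsum_eq_sum (s := range (m + 1)), BB, mul_sum]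
    intro s hs
    rw [mem_range, not_lt] at hs
    rw [bb_gt (by omega)]
    simp
  have hS : Summable fun s : ℕ => ∑' m : ℕ, X ^ (m + 1) * ((2 * (s : K) + 1) * bb m s) :=
    summN _ fun s => dvd_tsum _ _ fun m => (pow_dvd_pow _ (by omega)).trans (hdvd m s)
  rw [h1, swap _ hdvd, mul_comm, ← hS.tsum_mul_left]
  congr 1
  ext1 s
  have hsum : Summable fun m => X ^ (m + 1) * ((2 * (s : K) + 1) * bb m s) :=
    summN _ fun i => (pow_dvd_pow _ (by omega)).trans (hdvd i s)
  rw [← hsum.sum_add_tsum_nat_add s]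
  rw [sum_eq_zero (fun m hm => by rw [bb_gt (by simpa using hm)]; simp), zero_add]
  rw [← E2_Phi, Phi]
  have : ∀ i, X ^ (i + s + 1) * ((2 * (s : K) + 1) * bb (i + s) s) =
    ((-1) ^ s * (2 * (s : K) + 1) * X ^ (T s + s + 1)) * (X ^ i * R i * R (i + (2 * s + 1))) := by
    intro i
    rw [bb, Rs_add, show i + s + s + 1 = i + (2 * s + 1) by ring]
    ring
  simp only [this]
  rw [(Phi_summable _).tsum_mul_left]
  ring


lemma hs_of {ι : Type*} {f g : ι → K} {a b : K} (h : HasSum f a) (hf : ∀ i, g i = f i)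
    (ha : b = a) : HasSum g b := by
  rw [show g = f from funext hf, ha]; exact h

lemma summN2 (f : ℕ → K) (e : ℕ → ℕ) (c : ℕ) (he : ∀ i, i ≤ c * e i + c)
    (h : ∀ i, (X : K) ^ (e i) ∣ f i) : Summable f := by
  refine summ f e (fun N => ?_) h
  refine (Set.finite_le_nat (c * N + c)).subset ?_
  intro i hi
  simp only [Set.mem_ofPred_eq] at hi ⊢
  have := he i
  nlinarith

lemma summZ2 (f : ℤ → K) (e : ℤ → ℕ) (c : ℕ) (he : ∀ i, i.natAbs ≤ c * e i + c)
    (h : ∀ i, (X : K) ^ (e i) ∣ f i) : Summable f := by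
  refine summ f e (fun N => ?_) h
  refine (Set.finite_Icc (-((c * N + c : ℕ) : ℤ)) ((c * N + c : ℕ) : ℤ)).subset ?_
  intro i hi
  simp only [Set.mem_ofPred_eq] at hi
  simp only [Set.mem_Icc]
  have h1 := he i
  have h2 : i.natAbs ≤ c * N + c := by nlinarith
  omega

lemma summNN2 (f : ℕ × ℕ → K) (e : ℕ → ℕ → ℕ) (c : ℕ) (he : ∀ i j, i + j ≤ c * e i j + c)
    (h : ∀ i j, (X : K) ^ (e i j) ∣ f (i, j)) : Summable f := by
  refine summ f (fun p => e p.1 p.2) (fun N => ?_) (fun p => h p.1 p.2)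
  refine ((Set.finite_le_nat (c * N + c)).prod (Set.finite_le_nat (c * N + c))).subset ?_
  rintro ⟨a, b⟩ hab
  simp only [Set.mem_ofPred_eq] at hab
  simp only [Set.mem_prod, Set.mem_ofPred_eq]
  have h1 := he a b
  have h2 : a + b ≤ c * N + c := by nlinarith
  omega

lemma swap2 (f : ℕ → ℕ → K) (e : ℕ → ℕ → ℕ) (c : ℕ) (he : ∀ i j, i + j ≤ c * e i j + c)
    (h : ∀ i j, (X : K) ^ (e i j) ∣ f i j) :
    ∑' i, ∑' j, f i j = ∑' j, ∑' i, f i j := by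
  symm
  apply Summable.tsum_comm' (f := f)
  · exact summNN2 _ e c he (fun i j => h i j)
  · intro b
    exact summN2 _ (e b) c (fun i => (Nat.le_add_left i b).trans (he b i)) (h b)
  · intro b
    exact summN2 _ (fun i => e i b) c (fun i => (Nat.le_add_right i b).trans (he i b))
      (fun i => h i b)

def sg (k : ℤ) : K := ((Int.negOnePow k : ℤ) : K)

lemma sg_add (a b : ℤ) : sg (a + b) = sg a * sg b := by
  simp [sg, Int.negOnePow_add]
lemma sg_neg (a : ℤ) : sg (-a) = sg a := by simp [sg]
lemma sg_sub (a b : ℤ) : sg (a - b) = sg a * sg b := by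
  rw [sub_eq_add_neg, sg_add, sg_neg]
lemma sg_nat (n : ℕ) : sg (n : ℤ) = (-1) ^ n := by
  simp [sg]
lemma sg_one : sg 1 = -1 := by simp [sg]
lemma sg_zero : sg 0 = 1 := by simp [sg]
lemma sg_sq (a : ℤ) : sg a * sg a = 1 := by
  rw [← sg_sub, sub_self, sg_zero]

def Tz (n : ℤ) : ℕ := (n * (n + 1) / 2).toNat

lemma two_Tz (n : ℤ) : 2 * (Tz n : ℤ) = n * (n + 1) := by
  unfold Tz
  rw [Int.toNat_of_nonneg]
  · exact Int.two_mul_ediv_two_of_even (Int.even_mul_succ_self n)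
  · apply Int.ediv_nonneg _ (by norm_num)
    rcases le_or_gt 0 n with h | h
    · nlinarith
    · nlinarith

lemma Tz_nat (n : ℕ) : Tz n = T n := by
  have h1 := two_Tz n
  have h2 := two_T n
  zify at h2
  have : (Tz n : ℤ) = T n := by linarith
  exact_mod_cast this

lemma Tz_reflect (n : ℤ) : Tz (-(n + 1)) = Tz n := by
  have h1 := two_Tz n
  have h2 := two_Tz (-(n + 1))
  have : (Tz (-(n + 1)) : ℤ) = Tz n := by linarith
  exact_mod_cast this

lemma natAbs_le_Tz (n : ℤ) : n.natAbs ≤ Tz n + 1 := by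
  have h1 := two_Tz n
  have : (n.natAbs : ℤ) ≤ Tz n + 1 := by
    rcases le_or_gt 0 n with h | h
    · have : (n.natAbs : ℤ) = n := by omega
      nlinarith
    · have : (n.natAbs : ℤ) = -n := by omega
      nlinarith
  exact_mod_cast this

lemma jz0 : HasSum (fun c : ℤ => sg c * X ^ Tz c) (0 : K) := by
  have hs : Summable (fun c : ℤ => (sg c * X ^ Tz c : K)) :=
    summZ2 _ Tz 1 (fun i => by have := natAbs_le_Tz i; omega) (fun i => dvd_mul_left _ _)
  have h2 := hs.hasSum.nat_add_neg_add_one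
  have h3 : (fun n : ℕ => (sg n * X ^ Tz n : K) + sg (-(n + 1)) * X ^ Tz (-(n + 1)))
    = fun _ => 0 := by
    ext1 n
    rw [Tz_reflect, sg_neg, sg_add, sg_one]
    ring
  rw [h3] at h2
  rw [← h2.unique hasSum_zero]
  exact hs.hasSum

lemma jz1 : HasSum (fun c : ℤ => sg c * (c : K) * X ^ Tz c) (E ^ 3) := by
  have hs : Summable (fun c : ℤ => (sg c * (c : K) * X ^ Tz c : K)) :=
    summZ2 _ Tz 1 (fun i => by have := natAbs_le_Tz i; omega) (fun i => dvd_mul_left _ _)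
  have h2 := hs.hasSum.nat_add_neg_add_one
  have h3 : (fun n : ℕ => (sg n * ((n : ℤ) : K) * X ^ Tz n : K)
      + sg (-(n + 1)) * ((-(n + 1) : ℤ) : K) * X ^ Tz (-(n + 1)))
    = fun s : ℕ => (-1) ^ s * (2 * (s : K) + 1) * X ^ T s := by
    ext1 n
    rw [Tz_reflect, sg_neg, sg_add, sg_one, Tz_nat, sg_nat]
    push_cast
    ring
  rw [h3] at h2
  rw [jacobi, h2.tsum_eq]
  exact hs.hasSum

lemma jac2 (k : ℤ) : HasSum (fun b : ℕ => (-1) ^ b * (b : K) * (X ^ Tz (k - b) - X ^ Tz (k + b)))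
    (-(sg k * E ^ 3)) := by
  have h1 : HasSum (fun b : ℤ => sg b * (b : K) * X ^ Tz (k - b)) (-(sg k * E ^ 3)) := by
    rw [← (Equiv.subLeft k).hasSum_iff]
    have := (jz0.mul_left (sg k * (k : K))).sub (jz1.mul_left (sg k))
    refine hs_of this (fun c => ?_) ?_
    · simp only [Function.comp, Equiv.subLeft_apply]
      rw [sg_sub, show k - (k - c) = c by ring]
      push_cast
      ring
    · ring
  have h2 := h1.nat_add_neg
  convert h2 using 1
  · ext1 b
    rw [sg_neg, sg_nat, sub_neg_eq_add]
    push_cast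
    ring
  · simp

/-! ### The identity `DD (Q)³ = E (...)` -/

def vv (b : ℕ) : K := (b : K) * (1 - X ^ b : K)⁻¹

lemma vv_eq (b : ℕ) : (1 - X ^ b) * vv b = (b : K) := by
  unfold vv
  cases b with
  | zero => simp
  | succ b => linear_combination ((b + 1 : ℕ) : K) * one_sub_inv b

def CC : K := -2 * ∑' b : ℕ, (-1) ^ b * vv b * X ^ T b

lemma CC_summable : Summable fun b : ℕ => ((-1) ^ b * vv b * X ^ T b : K) :=
  summN _ fun i => Dvd.dvd.mul_left (pow_dvd_pow _ (le_T i)) _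

def zt (k b : ℕ) : K := (-1) ^ b * vv b * (X ^ Tz (k - 1 - b) + X ^ (Tz (k - 1 + b) + b))

lemma zt_dvd (k b : ℕ) : (X : K) ^ (b - k) ∣ zt k b := by
  unfold zt
  apply Dvd.dvd.mul_left
  apply dvd_add <;> apply pow_dvd_pow
  · have := natAbs_le_Tz (k - 1 - b); omega
  · omega

lemma zt_summable (k : ℕ) : Summable (zt k) :=
  summN2 _ (fun b => b - k) (k + 1) (fun b => by
    have : b ≤ (b - k) + k := by omega
    nlinarith) (zt_dvd k)

def zz (k : ℕ) : K := X ^ Tz (k - 1) * CC + ∑' b, zt k b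

lemma Tz_eq (a : ℕ) (n : ℤ) (h : 2 * (a : ℤ) = n * (n + 1)) : Tz n = a := by
  have := two_Tz n
  have : (Tz n : ℤ) = a := by linarith
  exact_mod_cast this

lemma zz_zero : zz 0 = 0 := by
  unfold zz CC
  have h : ∀ b, zt 0 b = 2 * ((-1) ^ b * vv b * X ^ T b) := by
    intro b
    unfold zt
    have e1 : Tz ((0 : ℕ) - 1 - b) = T b := by
      have := Tz_reflect b
      rw [← Tz_nat, ← this]; congr 1; push_cast; ring
    have e2 : Tz ((0 : ℕ) - 1 + b) + b = T b := by
      have h1 := two_Tz ((0 : ℕ) - 1 + b)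
      have h2 := two_T b
      zify at h2
      have : ((Tz ((0 : ℕ) - 1 + b) + b : ℕ) : ℤ) = T b := by push_cast at *; linarith
      exact_mod_cast this
    rw [e1, e2]
    ring
  have e0 : Tz ((0 : ℕ) - 1) = 0 := Tz_eq _ _ (by simp)
  simp only [h]
  rw [CC_summable.tsum_mul_left, e0]
  ring

lemma zz_succ (k : ℕ) : zz (k + 1) = X ^ k * zz k - (-1) ^ k * E ^ 3 := by
  have h := jac2 k
  unfold zz
  have e0 : Tz ((k + 1 : ℕ) - 1) = k + Tz (k - 1) := by
    have h1 := two_Tz (k - 1)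
    apply Tz_eq
    push_cast
    linarith
  have e : ∑' b, zt (k + 1) b - X ^ k * ∑' b, zt k b = - (sg k * E ^ 3) := by
    rw [← (zt_summable k).tsum_mul_left, ← (zt_summable (k + 1)).tsum_sub
      ((zt_summable k).mul_left _), ← h.tsum_eq]
    congr 1
    ext1 b
    unfold zt
    have a1 : Tz ((k + 1 : ℕ) - 1 - b) = Tz (k - b) := by congr 1; push_cast; ring
    have a2 : Tz ((k + 1 : ℕ) - 1 + b) = Tz (k + b) := by congr 1; push_cast; ring
    have a3 : k + Tz (k - 1 - b) = Tz (k - b) + b := by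
      have h1 := two_Tz (k - 1 - b)
      have h2 := two_Tz (k - b)
      have : ((k + Tz (k - 1 - b) : ℕ) : ℤ) = ((Tz (k - b) + b : ℕ) : ℤ) := by
        push_cast; linarith
      exact_mod_cast this
    have a4 : k + (Tz (k - 1 + b) + b) = Tz (k + b) := by
      have h1 := two_Tz (k - 1 + b)
      symm
      apply Tz_eq
      push_cast
      linarith
    rw [a1, a2]
    have : X ^ k * ((-1) ^ b * vv b * (X ^ Tz (k - 1 - b) + X ^ (Tz (k - 1 + b) + b)))
      = (-1) ^ b * vv b * (X ^ (k + Tz (k - 1 - b)) + X ^ (k + (Tz (k - 1 + b) + b))) := by ring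
    rw [this, a3, a4]
    rw [pow_add, pow_add]
    linear_combination (-1) ^ b * (X ^ Tz (k - b) - X ^ Tz (k + b)) * vv_eq b
  rw [sg_nat] at e
  rw [e0]
  linear_combination e

lemma zz_eq (k : ℕ) : (-1) ^ k * zz k = E ^ 3 * sig k := by
  induction k with
  | zero => simp [zz_zero, sig]
  | succ k ih =>
    rw [zz_succ, sig_succ]
    have : ((-1) ^ k * (-1) ^ k : K) = 1 := by rw [← mul_pow]; simp
    linear_combination (-X ^ k) * ih + E ^ 3 * this

lemma E_hasSum : HasSum (fun k : ℤ => sg k * X ^ pentagonal k) E :=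
  PowerSeries.WithPiTopology.hasSum_pentagonalSeries (ZMod 5)

lemma E_psi (b : ℕ) : HasSum (fun n : ℕ => (-1) ^ (n + b) *
    (X ^ (3 * Tz (n - 1 - b)) + X ^ (3 * (Tz (n - 1 + b) + b))) * psi n)
    (E * psi b + 2 * ((-1) ^ b * X ^ (3 * T b))) := by
  have h1 : HasSum (fun k : ℤ => sg (k - b) * X ^ (pentagonal (k - b) + b)) (E * X ^ b) := by
    have := E_hasSum.mul_right (X ^ b)
    rw [← (Equiv.subRight (b : ℤ)).hasSum_iff] at this
    refine hs_of this (fun k => ?_) rfl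
    simp only [Function.comp, Equiv.subRight_apply]
    ring
  have h2 : HasSum (fun k : ℤ => sg (k - b) * X ^ (pentagonal (b - k) + 2 * b))
      (E * X ^ (2 * b)) := by
    have := E_hasSum.mul_right (X ^ (2 * b))
    rw [← (Equiv.subLeft (b : ℤ)).hasSum_iff] at this
    refine hs_of this (fun k => ?_) rfl
    simp only [Function.comp, Equiv.subLeft_apply]
    rw [← sg_neg]
    ring_nf
  have h3 := (h1.add h2).nat_add_neg
  convert h3 using 1
  · ext1 n
    have p1 : pentagonal (n - b) + b = 3 * Tz (n - 1 - b) + n := by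
      have q1 := two_mul_natCast_pentagonal (n - b)
      have q2 := two_Tz (n - 1 - b)
      zify; linarith
    have p2 : pentagonal (b - n) + 2 * b = 3 * Tz (n - 1 - b) + 2 * n := by
      have q1 := two_mul_natCast_pentagonal (b - n)
      have q2 := two_Tz (n - 1 - b)
      zify; linarith
    have p3 : pentagonal (-n - b) + b = 3 * (Tz (n - 1 + b) + b) + 2 * n := by
      have q1 := two_mul_natCast_pentagonal (-n - b)
      have q2 := two_Tz (n - 1 + b)
      zify; linarith
    have p4 : pentagonal (b - -n) + 2 * b = 3 * (Tz (n - 1 + b) + b) + n := by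
      have q1 := two_mul_natCast_pentagonal (b - -n)
      have q2 := two_Tz (n - 1 + b)
      zify; linarith
    rw [p1, p2, p3, p4, sg_sub, sg_sub, sg_neg, sg_nat, sg_nat, psi]
    ring
  · have p1 : pentagonal (0 - b) + b = 3 * T b := by
      have q1 := two_mul_natCast_pentagonal (0 - b)
      have q2 := two_T b
      zify at q2 ⊢; linarith
    have p2 : pentagonal (b - 0) + 2 * b = 3 * T b := by
      have q1 := two_mul_natCast_pentagonal (b - 0)
      have q2 := two_T b
      zify at q2 ⊢; linarith
    rw [p1, p2, sg_sub, sg_nat, sg_zero, psi]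
    ring

lemma two_ne : (2 : K) * 3 = 1 := by
  have : (2 * 3 : ZMod 5) = 1 := by decide
  have h2 := congrArg (C (R := ZMod 5)) this
  rw [map_mul, map_ofNat, map_ofNat, map_one] at h2
  exact h2

lemma E_add_one : HasSum (fun n : ℕ => (-1) ^ n * X ^ (3 * Tz (n - 1)) * psi n) (E + 1) := by
  have h := (E_psi 0).mul_left 3
  refine hs_of h (fun n => ?_) ?_
  · simp only [Nat.cast_zero, sub_zero, add_zero]
    linear_combination (-(-1) ^ n * X ^ (3 * Tz (n - 1)) * psi n) * two_ne
  · simp only [psi, T_zero]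
    linear_combination (- E - 1) * two_ne

def Lam : K := ∑' b, phi (vv b) * psi b

lemma psi_dvd (b : ℕ) : (X : K) ^ b ∣ psi b :=
  dvd_add dvd_rfl (pow_dvd_pow _ (by omega))

lemma Lam_summable : Summable fun b => phi (vv b) * psi b :=
  summN _ fun b => (psi_dvd b).mul_left _

lemma phi_pow (n : ℕ) : phi (X ^ n) = X ^ (3 * n) := by rw [map_pow, phi_X, ← pow_mul]

lemma I4 : DD * phi E ^ 3 = E * (Lam + phi CC) := by
  -- double family
  set f : ℕ → ℕ → K := fun b n => (-1) ^ n * phi (zt n b) * psi n with hf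
  have hfb : ∀ b n, f b n = phi (vv b) * ((-1) ^ (n + b) *
    (X ^ (3 * Tz (n - 1 - b)) + X ^ (3 * (Tz (n - 1 + b) + b))) * psi n) := by
    intro b n
    simp only [hf, zt, map_mul, map_add, phi_X, map_pow, map_neg, map_one]
    ring
  have hdvd : ∀ b n, (X : K) ^ max b n ∣ f b n := by
    intro b n
    rw [hfb]
    apply Dvd.dvd.mul_left
    have : ∀ A : K, (-1) ^ (n + b) * A * psi n = (-1) ^ (n + b) * (A * psi n) := fun A => by ring
    rw [this, add_mul]
    apply Dvd.dvd.mul_left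
    apply dvd_add
    · refine dvd_trans ?_ (mul_dvd_mul_left _ (psi_dvd n))
      rw [← pow_add]
      apply pow_dvd_pow
      have := natAbs_le_Tz (n - 1 - b); omega
    · refine dvd_trans ?_ (mul_dvd_mul_left _ (psi_dvd n))
      rw [← pow_add]
      apply pow_dvd_pow
      omega
  have hsw := swap2 f (fun b n => max b n) 2 (fun i j => by omega) hdvd
  have hC : phi CC = -2 * ∑' b, phi (vv b) * ((-1) ^ b * X ^ (3 * T b)) := by
    unfold CC
    rw [map_mul, phi_tsum _ CC_summable]
    congr 1
    · rw [map_neg, map_ofNat]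
    congr 1
    ext1 b
    simp only [map_mul, phi_X, map_pow, map_neg, map_one]
    ring
  have hCs : Summable fun b => phi (vv b) * ((-1) ^ b * X ^ (3 * T b)) := summN _ fun b =>
    Dvd.dvd.mul_left (Dvd.dvd.mul_left (pow_dvd_pow _ (by have := le_T b; omega)) _) _
  have hfs : Summable fun b => ∑' n, f b n := summN _ fun b => dvd_tsum _ _ fun n =>
    (pow_dvd_pow _ (le_max_left _ _)).trans (hdvd b n)
  have hgs : Summable fun n => ∑' b, f b n := summN _ fun n => dvd_tsum _ _ fun b =>
    (pow_dvd_pow _ (le_max_right _ _)).trans (hdvd b n)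
  have hEL : E * Lam = ∑' b, ∑' n, f b n + phi CC := by
    rw [hC, Lam, ← Lam_summable.tsum_mul_left, neg_mul, ← sub_eq_add_neg,
      ← hCs.tsum_mul_left, ← hfs.tsum_sub (hCs.mul_left _)]
    congr 1
    ext1 b
    have : ∑' n, f b n = phi (vv b) * (E * psi b + 2 * ((-1) ^ b * X ^ (3 * T b))) := by
      simp only [hfb]
      exact ((E_psi b).mul_left _).tsum_eq
    rw [this]
    ring
  have hEC : E * phi CC = ∑' n : ℕ, phi CC * ((-1) ^ n * X ^ (3 * Tz (n - 1)) * psi n) - phi CC := by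
    rw [(E_add_one.mul_left (phi CC)).tsum_eq]
    ring
  rw [mul_add, hEL, hEC, hsw]
  have hfin : ∑' n, ∑' b, f b n + ∑' n : ℕ, phi CC * ((-1) ^ n * X ^ (3 * Tz (n - 1)) * psi n)
      = ∑' n, phi E ^ 3 * (phi (sig n) * psi n) := by
    rw [← hgs.tsum_add (E_add_one.mul_left (phi CC)).summable]
    congr 1
    ext1 n
    have e1 : ∑' b, f b n = (-1) ^ n * phi (∑' b, zt n b) * psi n := by
      rw [phi_tsum _ (zt_summable n)]
      have hs : Summable fun b => phi (zt n b) := (zt_summable n).map phi continuous_phi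
      have := ((hs.mul_left ((-1) ^ n)).tsum_mul_right (psi n))
      rw [hs.tsum_mul_left] at this
      exact this
    have e2 := congrArg phi (zz_eq n)
    simp only [zz, map_mul, map_add, map_pow, map_neg, map_one, phi_X] at e2
    rw [e1, pow_mul]
    linear_combination psi n * e2
  have hDs : Summable fun n => phi (sig n) * psi n := summN _ fun n => (psi_dvd n).mul_left _
  have hD : DD = ∑' n, phi (sig n) * psi n := by
    rw [DD_eq_sig, hDs.tsum_eq_zero_add]
    simp [sig]
  rw [hDs.tsum_mul_left, ← hD] at hfin
  linear_combination -hfin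

def ss : K := ∑' b, vv b * X ^ b

lemma ss_summable : Summable fun b => vv b * X ^ b := summN _ fun b => dvd_mul_left _ _

lemma Lam_eq : Lam = ss - phi ss := by
  unfold Lam ss
  have hs : Summable fun b => phi (vv b * X ^ b) := ss_summable.map phi continuous_phi
  rw [phi_tsum _ ss_summable, ← ss_summable.tsum_sub hs]
  congr 1
  ext1 b
  have h1 := vv_eq b
  have h2 := congrArg phi h1
  simp only [map_mul, map_sub, map_one, phi_pow, map_natCast] at h2
  rcases Nat.eq_zero_or_pos b with rfl | hb
  · simp [vv]
  · have hne : (1 - X ^ (3 * b) : K) ≠ 0 := by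
      intro h
      have := congrArg (constantCoeff (R := ZMod 5)) h
      simp [hb.ne'] at this
    apply mul_left_cancel₀ hne
    simp only [Function.comp, map_mul, phi_pow]
    unfold psi
    linear_combination (X ^ b + X ^ (2 * b) + X ^ (3 * b)) * h2
      - (X ^ b + X ^ (2 * b) + X ^ (3 * b)) * h1


/-! ### base `X^3` Euler series -/

def GG (a : ℕ) : K := ∑' l, X ^ (a * l) * phi (R l)

lemma GG_summable (a : ℕ) : Summable fun l => (X ^ ((a + 1) * l) * phi (R l) : K) :=
  summN _ fun l => Dvd.dvd.mul_right (pow_dvd_pow _ (by nlinarith)) _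

lemma GG_rec (a : ℕ) : GG (a + 1 + 3) = (1 - X ^ (a + 1)) * GG (a + 1) := by
  have h : GG (a + 1) - GG (a + 1 + 3) = X ^ (a + 1) * GG (a + 1) := by
    unfold GG
    have hs2 : Summable fun l => (X ^ ((a + 1 + 3) * l) * phi (R l) : K) := GG_summable (a + 3)
    rw [← (GG_summable a).tsum_sub hs2, ((GG_summable a).sub hs2).tsum_eq_zero_add,
      ← (GG_summable a).tsum_mul_left]
    simp only [mul_zero, pow_zero, sub_self, zero_add]
    congr 1
    ext1 l
    have h1 := congrArg phi (R_succ l)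
    simp only [map_mul, map_sub, map_one, map_pow, phi_X] at h1
    rw [h1]
    ring
  linear_combination -h

lemma GG_dvd (a : ℕ) : X ^ (a + 1) ∣ GG (a + 1) - 1 := by
  have : GG (a + 1) - 1 = ∑' l, (X ^ ((a + 1) * (l + 1)) * phi (R (l + 1)) : K) := by
    unfold GG
    rw [(GG_summable a).tsum_eq_zero_add]
    simp [R_zero]
  rw [this]
  exact dvd_tsum _ _ fun l => Dvd.dvd.mul_right (pow_dvd_pow _ (by nlinarith)) _

lemma GG_partial (n : ℕ) : GG 1 * GG 2 * P (3 * n) = GG (3 * n + 1) * GG (3 * n + 2) * phi (P n) := by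
  induction n with
  | zero => simp [P_zero]
  | succ n ih =>
    have h1 := GG_rec (3 * n)
    have h2 := GG_rec (3 * n + 1)
    have h3 : P (3 * (n + 1)) = P (3 * n) * (1 - X ^ (3 * n + 1)) * (1 - X ^ (3 * n + 2))
        * (1 - X ^ (3 * n + 3)) := by
      rw [show 3 * (n + 1) = 3 * n + 1 + 1 + 1 by ring, P_succ, P_succ, P_succ]
    have h4 : phi (P (n + 1)) = phi (P n) * (1 - X ^ (3 * n + 3)) := by
      rw [P_succ, map_mul, map_sub, map_one, phi_pow]; ring
    rw [show 3 * (n + 1) + 1 = 3 * n + 1 + 3 by ring, show 3 * (n + 1) + 2 = 3 * n + 1 + 1 + 3 by ring,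
      h1, h2, h3, h4]
    linear_combination (1 - X ^ (3 * n + 1)) * (1 - X ^ (3 * n + 2))
        * (1 - X ^ (3 * n + 3)) * ih

lemma GG_prod : GG 1 * GG 2 * E = phi E := by
  apply eq_of_dvd
  intro n
  have h1 : X ^ n ∣ P (3 * n) - E := (pow_dvd_pow _ (by omega)).trans (P_sub_E (3 * n))
  have h2 : X ^ n ∣ phi (P n) - phi E := by
    rw [← map_sub]
    exact (pow_dvd_pow _ (by omega)).trans (phi_dvd _ _ (P_sub_E n))
  have h3 : X ^ n ∣ GG (3 * n + 1) - 1 := (pow_dvd_pow _ (by omega)).trans (GG_dvd (3 * n))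
  have h4 : X ^ n ∣ GG (3 * n + 2) - 1 := (pow_dvd_pow _ (by omega)).trans (GG_dvd (3 * n + 1))
  have := GG_partial n
  have e : GG 1 * GG 2 * E - phi E = -(GG 1 * GG 2) * (P (3 * n) - E)
    + GG (3 * n + 2) * phi (P n) * (GG (3 * n + 1) - 1) + phi (P n) * (GG (3 * n + 2) - 1)
    + (phi (P n) - phi E) := by linear_combination this
  rw [e]
  exact dvd_add (dvd_add (dvd_add (h1.mul_left _) (h3.mul_left _)) (h4.mul_left _)) h2

def eqv : ℤ × ℕ ≃ ℕ × ℕ where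
  toFun p := (p.2 + p.1.toNat, p.2 + (-p.1).toNat)
  invFun p := ((p.1 : ℤ) - p.2, min p.1 p.2)
  left_inv := by rintro ⟨k, i⟩; ext <;> simp <;> omega
  right_inv := by rintro ⟨k, i⟩; ext <;> simp <;> omega

def ww (k : ℤ) : ℕ := k.toNat + 2 * (-k).toNat

def gf (l m : ℕ) : K := X ^ (1 * l) * phi (R l) * (X ^ (2 * m) * phi (R m))

lemma gf_summable : Summable fun p : ℕ × ℕ => gf p.1 p.2 := summNN _ fun i j => by
    have : gf i j = X ^ (i + j) * (X ^ j * phi (R i) * phi (R j)) := by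
      simp only [gf]; ring
    simp only [this]; exact dvd_mul_right _ _

lemma gf_eqv (k : ℤ) (i : ℕ) : gf (eqv (k, i)).1 (eqv (k, i)).2
    = X ^ ww k * phi (X ^ i * R i * R (i + k.natAbs)) := by
  simp only [gf, eqv, ww, Equiv.coe_fn_mk, map_mul, map_pow, phi_X]
  rcases le_or_gt 0 k with h | h
  · have a1 : k.natAbs = k.toNat := by omega
    have a2 : (-k).toNat = 0 := by omega
    rw [a1, a2]
    ring
  · have a1 : k.natAbs = (-k).toNat := by omega
    have a2 : k.toNat = 0 := by omega
    rw [a1, a2]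
    ring

lemma gf_tsum : GG 1 * GG 2 = ∑' p : ℕ × ℕ, gf p.1 p.2 := by
  have s1 : Summable fun l => (X ^ (1 * l) * phi (R l) : K) := GG_summable 0
  have s2 : Summable fun l => (X ^ (2 * l) * phi (R l) : K) := GG_summable 1
  have hl : ∀ l, Summable fun m => gf l m := fun l => s2.mul_left _
  have e := gf_summable.tsum_prod' hl
  rw [e]
  unfold GG
  rw [← s1.tsum_mul_right]
  congr 1
  ext1 l
  rw [← s2.tsum_mul_left]
  rfl

lemma GG_mul : GG 1 * GG 2 = ∑' k : ℤ, X ^ ww k * phi (Phi k.natAbs) := by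
  have hs' : Summable fun p : ℤ × ℕ => gf (eqv p).1 (eqv p).2 :=
    (eqv.summable_iff (f := fun p : ℕ × ℕ => gf p.1 p.2)).mpr gf_summable
  have hphi : ∀ k : ℤ, Summable fun i => phi (X ^ i * R i * R (i + k.natAbs)) := fun k =>
    (Phi_summable k.natAbs).map phi continuous_phi
  have hl : ∀ k : ℤ, Summable fun i : ℕ => gf (eqv (k, i)).1 (eqv (k, i)).2 := by
    intro k
    simp only [gf_eqv]
    exact (hphi k).mul_left _
  rw [gf_tsum, ← eqv.tsum_eq (fun p : ℕ × ℕ => gf p.1 p.2), hs'.tsum_prod' hl]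
  congr 1
  ext1 k
  simp only [gf_eqv]
  rw [(hphi k).tsum_mul_left, Phi, phi_tsum _ (Phi_summable _)]

def cc : K := ∑' k : ℤ, X ^ ww k * phi (aa k.natAbs)

lemma cc_E : cc * E = phi E ^ 3 := by
  have h := GG_prod
  have hs : Summable fun k : ℤ => X ^ ww k * phi (Phi k.natAbs) :=
    summZ _ fun k => Dvd.dvd.mul_right (pow_dvd_pow _ (by unfold ww; omega)) _
  have h2 : phi E ^ 2 * (GG 1 * GG 2) = cc := by
    rw [GG_mul, ← hs.tsum_mul_left, cc]
    congr 1
    ext1 k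
    rw [← E2_Phi, map_mul, map_pow]
    ring
  linear_combination phi E ^ 2 * h - E * h2


/-! ### coefficients of `cc` -/

def ee (k : ℤ) (j : ℕ) : ℕ := ww k + 3 * (T j + k.natAbs * j)

def oo (k : ℤ) (j : ℕ) : ℕ :=
  if 0 ≤ k then (if j % 2 = 0 then 3 * j + 1 else 3 * j + 2 + 6 * k.natAbs)
  else (if j % 2 = 0 then 3 * j + 1 + 6 * k.natAbs else 3 * j + 2)

def tt (k : ℤ) (j : ℕ) : ℕ :=
  if 0 ≤ k then (if j % 2 = 0 then 3 * j + 2 + 6 * k.natAbs else 3 * j + 1)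
  else (if j % 2 = 0 then 3 * j + 2 else 3 * j + 1 + 6 * k.natAbs)

lemma oo_mul_tt (k : ℤ) (j : ℕ) : oo k j * tt k j = 2 * (3 * ee k j + 1) := by
  have h2 := two_T j
  unfold oo tt ee ww
  rcases le_or_gt 0 k with h | h
  · obtain ⟨m, rfl⟩ := Int.eq_ofNat_of_zero_le h
    simp only [h, if_true, Int.natAbs_natCast, Int.toNat_natCast, Int.toNat_neg_natCast]
    split_ifs <;> nlinarith
  · obtain ⟨m, hm⟩ := Int.eq_ofNat_of_zero_le (show 0 ≤ -k by omega)
    obtain rfl : k = -(m : ℤ) := by omega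
    have h' : ¬ (0 ≤ -(m : ℤ)) := by omega
    simp only [h', if_false, Int.natAbs_neg, neg_neg, Int.natAbs_natCast, Int.toNat_natCast,
      Int.toNat_neg_natCast]
    split_ifs <;> nlinarith

def gk (o t : ℕ) : ℤ :=
  if min o t % 3 = 1 then (((max o t - min o t - 1) / 6 : ℕ) : ℤ)
  else - (((max o t - min o t + 1) / 6 : ℕ) : ℤ)

def gj (o t : ℕ) : ℕ := min o t / 3

lemma gk_oo (k : ℤ) (j : ℕ) : gk (oo k j) (tt k j) = k := by
  unfold gk oo tt
  split_ifs <;> omega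

lemma gj_oo (k : ℤ) (j : ℕ) : gj (oo k j) (tt k j) = j := by
  unfold gj oo tt
  split_ifs <;> omega

lemma oo_g (o t : ℕ) (ho : o % 2 = 1) (ht : t % 2 = 0)
    (h : (o % 3 = 1 ∧ t % 3 = 2) ∨ (o % 3 = 2 ∧ t % 3 = 1)) : oo (gk o t) (gj o t) = o := by
  unfold gk gj oo
  split_ifs <;> omega

lemma tt_g (o t : ℕ) (ho : o % 2 = 1) (ht : t % 2 = 0)
    (h : (o % 3 = 1 ∧ t % 3 = 2) ∨ (o % 3 = 2 ∧ t % 3 = 1)) : tt (gk o t) (gj o t) = t := by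
  unfold gk gj tt
  split_ifs <;> omega

def chi (o : ℕ) : ZMod 5 := if o % 3 = 1 then 1 else if o % 3 = 2 then -1 else 0

lemma chi_oo (k : ℤ) (j : ℕ) : chi (oo k j) = (-1) ^ j := by
  rcases Nat.even_or_odd j with hj | hj
  · rw [hj.neg_one_pow]
    have : j % 2 = 0 := Nat.even_iff.mp hj
    have : oo k j % 3 = 1 := by unfold oo; split_ifs; all_goals omega
    simp [chi, this]
  · rw [hj.neg_one_pow]
    have : j % 2 = 1 := Nat.odd_iff.mp hj
    have : oo k j % 3 = 2 := by unfold oo; split_ifs; all_goals omega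
    simp [chi, this]

lemma oo_odd (k : ℤ) (j : ℕ) : oo k j % 2 = 1 := by
  unfold oo; split_ifs <;> omega
lemma tt_even (k : ℤ) (j : ℕ) : tt k j % 2 = 0 := by
  unfold tt; split_ifs <;> omega

def cf (p : ℤ × ℕ) : K := (-1) ^ p.2 * X ^ ee p.1 p.2

lemma cf_summable : Summable cf := by
  refine summ cf (fun p => ee p.1 p.2) (fun N => ?_) (fun p => dvd_mul_left _ _)
  refine ((Set.finite_Icc (-(N : ℤ)) N).prod (Set.finite_le_nat N)).subset ?_
  rintro ⟨k, j⟩ h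
  simp only [Set.mem_ofPred_eq, ee, ww] at h
  simp only [Set.mem_prod, Set.mem_Icc, Set.mem_ofPred_eq]
  have := le_T j
  have : 0 ≤ k.natAbs * j := Nat.zero_le _
  omega

lemma cc_eq : cc = ∑' p, cf p := by
  have hp : ∀ k : ℤ, Summable fun j => phi ((-1) ^ j * X ^ (T j + k.natAbs * j)) := fun k =>
    (aa_summable k.natAbs).map phi continuous_phi
  have e : ∀ (k : ℤ) (j : ℕ), cf (k, j) = X ^ ww k * phi ((-1) ^ j * X ^ (T j + k.natAbs * j)) := by
    intro k j
    simp only [cf, ee, map_mul, map_pow, map_neg, map_one, phi_X]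
    ring
  have hl : ∀ k : ℤ, Summable fun j => cf (k, j) := by
    intro k
    simp only [e]
    exact (hp k).mul_left _
  rw [cf_summable.tsum_prod' hl, cc]
  congr 1
  ext1 k
  simp only [e]
  rw [(hp k).tsum_mul_left, aa, phi_tsum _ (aa_summable _)]

def rr (N : ℕ) : ZMod 5 := ∑ o ∈ N.divisors.filter (fun o => o % 2 = 1), chi o

lemma coeff_cf (n : ℕ) (p : ℤ × ℕ) : coeff n (cf p) = if ee p.1 p.2 = n then (-1) ^ p.2 else 0 := by
  have : cf p = C ((-1) ^ p.2 : ZMod 5) * X ^ ee p.1 p.2 := by simp [cf]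
  rw [this, coeff_C_mul, coeff_X_pow]
  split_ifs with h1 h2 h2
  · simp
  · exact absurd h1.symm h2
  · exact absurd h2.symm h1
  · simp

lemma coeff_cc (n : ℕ) : coeff n cc = rr (3 * n + 1) := by
  rw [cc_eq, coeff_tsum' _ cf_summable]
  simp only [coeff_cf]
  set D := (3 * n + 1).divisors.filter (fun o => o % 2 = 1) with hD
  have key : ∀ o ∈ D, o % 2 = 1 ∧ (2 * ((3 * n + 1) / o)) % 2 = 0 ∧
      ((o % 3 = 1 ∧ (2 * ((3 * n + 1) / o)) % 3 = 2) ∨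
        (o % 3 = 2 ∧ (2 * ((3 * n + 1) / o)) % 3 = 1)) ∧
      o * (2 * ((3 * n + 1) / o)) = 2 * (3 * n + 1) := by
    intro o ho
    simp only [hD, mem_filter, Nat.mem_divisors] at ho
    obtain ⟨⟨⟨s, hs⟩, -⟩, ho⟩ := ho
    have ho0 : 0 < o := by omega
    rw [hs, Nat.mul_div_cancel_left _ ho0]
    refine ⟨ho, by omega, ?_, by ring⟩
    have h3 : (o * s) % 3 = 1 := by omega
    rw [Nat.mul_mod] at h3
    have a1 : o % 3 < 3 := Nat.mod_lt _ (by norm_num)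
    have a2 : s % 3 < 3 := Nat.mod_lt _ (by norm_num)
    generalize hx : o % 3 = x at *
    generalize hy : s % 3 = y at *
    interval_cases x <;> interval_cases y <;> simp at h3 <;> omega
  let g : D → ℤ × ℕ := fun o => (gk o (2 * ((3 * n + 1) / o)), gj o (2 * ((3 * n + 1) / o)))
  have hg : Function.Injective g := by
    intro o1 o2 h
    obtain ⟨h1, h2, h3, -⟩ := key o1 o1.2
    obtain ⟨k1, k2, k3, -⟩ := key o2 o2.2
    have e1 := oo_g _ _ h1 h2 h3
    have e2 := oo_g _ _ k1 k2 k3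
    simp only [g, Prod.mk.injEq] at h
    rw [h.1, h.2, e2] at e1
    exact Subtype.ext e1.symm
  rw [← hg.tsum_eq]
  · rw [tsum_fintype, rr, ← hD, ← Finset.sum_coe_sort D]
    apply Finset.sum_congr rfl
    intro o _
    obtain ⟨h1, h2, h3, h4⟩ := key o o.2
    have e1 := oo_g _ _ h1 h2 h3
    have e2 := tt_g _ _ h1 h2 h3
    have e3 := oo_mul_tt (g o).1 (g o).2
    have e4 := chi_oo (g o).1 (g o).2
    have e5 : ee (g o).1 (g o).2 = n := by
      simp only [g] at e3 ⊢
      rw [e1, e2, h4] at e3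
      omega
    rw [if_pos e5, ← e4]
    simp only [g]
    rw [e1]
  · rintro ⟨k, j⟩ h
    simp only [Function.mem_support] at h
    have h' : ee k j = n := by
      by_contra hne
      exact h (if_neg hne)
    have e := oo_mul_tt k j
    rw [h'] at e
    have h1 := oo_odd k j
    have h2 := tt_even k j
    obtain ⟨s, hs⟩ : ∃ s, tt k j = 2 * s := ⟨tt k j / 2, by omega⟩
    have e2 : 3 * n + 1 = oo k j * s := by rw [hs] at e; nlinarith
    have hm : oo k j ∈ D := by
      simp only [hD, mem_filter, Nat.mem_divisors]
      exact ⟨⟨⟨s, e2⟩, by omega⟩, h1⟩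
    refine ⟨⟨oo k j, hm⟩, ?_⟩
    simp only [g]
    have : 2 * ((3 * n + 1) / oo k j) = tt k j := by
      rw [e2, Nat.mul_div_cancel_left _ (by omega), hs]
    rw [this, gk_oo, gj_oo]

lemma chi_five (o : ℕ) : chi (5 * o) = - chi o := by
  unfold chi
  rcases (show o % 3 = 0 ∨ o % 3 = 1 ∨ o % 3 = 2 by omega) with h | h | h
  · have : (5 * o) % 3 = 0 := by omega
    simp [h, this]
  · have : (5 * o) % 3 = 2 := by omega
    simp [h, this]
  · have : (5 * o) % 3 = 1 := by omega
    simp [h, this]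

def D5 (N : ℕ) : Finset ℕ := N.divisors.filter (fun o => o % 2 = 1)

lemma D5_five (M : ℕ) (hM : M ≠ 0) :
    ∑ o ∈ (D5 (5 * M)).filter (fun o => 5 ∣ o), chi o = - rr M := by
  rw [rr, ← Finset.sum_neg_distrib]
  symm
  apply Finset.sum_bij (fun o _ => 5 * o)
  · intro o ho
    simp only [D5, mem_filter, Nat.mem_divisors] at *
    exact ⟨⟨⟨Nat.mul_dvd_mul_left 5 ho.1.1, by omega⟩, by omega⟩, dvd_mul_right _ _⟩
  · intro a _ b _ h
    omega
  · intro b hb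
    simp only [D5, mem_filter, Nat.mem_divisors] at hb
    obtain ⟨⟨⟨h1, h2⟩, h3⟩, ⟨c, rfl⟩⟩ := hb
    refine ⟨c, ?_, rfl⟩
    simp only [mem_filter, Nat.mem_divisors]
    exact ⟨⟨Nat.dvd_of_mul_dvd_mul_left (by norm_num) h1, hM⟩, by omega⟩
  · intro a _
    rw [chi_five]

lemma D5_not (M : ℕ) (hM : M ≠ 0) :
    (D5 (5 * M)).filter (fun o => ¬ 5 ∣ o) = (D5 M).filter (fun o => ¬ 5 ∣ o) := by
  ext o
  simp only [D5, mem_filter, Nat.mem_divisors]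
  constructor
  · rintro ⟨⟨⟨h1, h2⟩, h3⟩, h4⟩
    refine ⟨⟨⟨?_, hM⟩, h3⟩, h4⟩
    have : Nat.Coprime o 5 := ((Nat.Prime.coprime_iff_not_dvd (by norm_num)).mpr h4).symm
    exact this.dvd_of_dvd_mul_left h1
  · rintro ⟨⟨⟨h1, h2⟩, h3⟩, h4⟩
    exact ⟨⟨⟨h1.mul_left 5, by omega⟩, h3⟩, h4⟩

lemma rr_five (M : ℕ) (hM : M ≠ 0) :
    rr (5 * M) = - ∑ o ∈ (D5 M).filter (fun o => 5 ∣ o), chi o := by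
  have h1 := Finset.sum_filter_add_sum_filter_not (D5 (5 * M)) (fun o => 5 ∣ o) chi
  have h2 := Finset.sum_filter_add_sum_filter_not (D5 M) (fun o => 5 ∣ o) chi
  rw [D5_five M hM, D5_not M hM] at h1
  have h3 : ∑ o ∈ D5 M, chi o = rr M := rfl
  have h4 : ∑ o ∈ D5 (5 * M), chi o = rr (5 * M) := rfl
  rw [h3] at h2
  rw [h4] at h1
  linear_combination h2 - h1

lemma rr_five_of_not_dvd (M : ℕ) (hM : M ≠ 0) (h : ¬ 5 ∣ M) : rr (5 * M) = 0 := by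
  rw [rr_five M hM, Finset.filter_false_of_mem]
  · simp
  · intro o ho h5
    simp only [D5, mem_filter, Nat.mem_divisors] at ho
    exact h (h5.trans ho.1.1)

lemma rr_25 (M : ℕ) (hM : M ≠ 0) : rr (25 * M) = rr M := by
  rw [show 25 * M = 5 * (5 * M) by ring, rr_five _ (by omega), D5_five M hM, neg_neg]

lemma coeff_cc_25 (m : ℕ) : coeff (25 * m + 8) cc = coeff m cc := by
  rw [coeff_cc, coeff_cc, show 3 * (25 * m + 8) + 1 = 25 * (3 * m + 1) by ring, rr_25 _ (by omega)]

lemma coeff_cc_zero (n : ℕ) (h : n % 5 = 3) (h' : n % 25 ≠ 8) : coeff n cc = 0 := by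
  rw [coeff_cc]
  obtain ⟨M, hM⟩ : 5 ∣ 3 * n + 1 := by omega
  rw [hM]
  apply rr_five_of_not_dvd <;> omega


/-! ### Frobenius -/

instance charK : CharP K 5 := by
  refine charP_of_injective_algebraMap (R := ZMod 5) ?_ 5
  exact FaithfulSMul.algebraMap_injective _ _

lemma coeff_pow5 (f : K) (n : ℕ) : coeff n (f ^ 5) = if 5 ∣ n then coeff (n / 5) f else 0 := by
  have h1 : X ^ (n + 1) ∣ f - (trunc (n + 1) f : K) := by
    rw [X_pow_dvd_iff]
    intro m hm
    rw [map_sub, Polynomial.coeff_coe, coeff_trunc, if_pos hm, sub_self]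
  have h2 : X ^ (n + 1) ∣ f ^ 5 - (trunc (n + 1) f : K) ^ 5 := by
    rw [← sub_pow_char]
    exact h1.trans (dvd_pow_self _ (by norm_num))
  rw [X_pow_dvd_iff] at h2
  have h3 := h2 n (by omega)
  rw [map_sub, sub_eq_zero] at h3
  rw [h3, ← Polynomial.coe_pow, ← ZMod.expand_card, Polynomial.coeff_coe,
    Polynomial.coeff_expand (by norm_num)]
  split_ifs with h
  · rw [coeff_trunc, if_pos (by omega)]
  · rfl

lemma coeff_pow25 (f : K) (n : ℕ) : coeff n (f ^ 25) = if 25 ∣ n then coeff (n / 25) f else 0 := by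
  rw [show 25 = 5 * 5 by norm_num, pow_mul, coeff_pow5, coeff_pow5]
  split_ifs with h1 h2 h3 h3
  · rw [Nat.div_div_eq_div_mul]
  · omega
  · omega
  · rfl
  · omega
  · rfl

/-! ### classes mod 5 -/

def Cl (c : ZMod 5) (f : K) : Prop := ∀ n : ℕ, (n : ZMod 5) ≠ c → coeff n f = 0

def pr (c : ZMod 5) (f : K) : K := PowerSeries.mk fun n => if (n : ZMod 5) = c then coeff n f else 0

lemma coeff_pr (c : ZMod 5) (f : K) (n : ℕ) :
    coeff n (pr c f) = if (n : ZMod 5) = c then coeff n f else 0 := coeff_mk _ _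

lemma pr_add (c : ZMod 5) (f g : K) : pr c (f + g) = pr c f + pr c g := by
  ext n; simp only [map_add, coeff_pr]; split_ifs <;> simp
lemma pr_sub (c : ZMod 5) (f g : K) : pr c (f - g) = pr c f - pr c g := by
  ext n; simp only [map_sub, coeff_pr]; split_ifs <;> simp
lemma pr_neg (c : ZMod 5) (f : K) : pr c (-f) = -pr c f := by
  ext n; simp only [map_neg, coeff_pr]; split_ifs <;> simp

lemma Cl_pr (c : ZMod 5) (f : K) : Cl c (pr c f) := by
  intro n hn; rw [coeff_pr, if_neg hn]

lemma pr_self {c : ZMod 5} {f : K} (h : Cl c f) : pr c f = f := by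
  ext n; rw [coeff_pr]; split_ifs with hn
  · rfl
  · exact (h n hn).symm

lemma pr_ne {c d : ZMod 5} {f : K} (h : Cl d f) (hcd : d ≠ c) : pr c f = 0 := by
  ext n; rw [coeff_pr]; split_ifs with hn
  · rw [h n (by rw [hn]; exact hcd.symm)]; simp
  · simp

lemma pr_mul {d : ZMod 5} {a : K} (ha : Cl d a) (c : ZMod 5) (f : K) :
    pr c (a * f) = a * pr (c - d) f := by
  ext n
  rw [coeff_pr, coeff_mul, coeff_mul]
  split_ifs with hn
  · apply Finset.sum_congr rfl
    rintro ⟨i, j⟩ hij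
    rw [Finset.HasAntidiagonal.mem_antidiagonal] at hij
    by_cases hi : (i : ZMod 5) = d
    · rw [coeff_pr, if_pos]
      simp only at hij ⊢
      rw [← hn, ← hij, ← hi]; push_cast; ring
    · simp [ha i hi]
  · symm
    apply Finset.sum_eq_zero
    rintro ⟨i, j⟩ hij
    rw [Finset.HasAntidiagonal.mem_antidiagonal] at hij
    by_cases hi : (i : ZMod 5) = d
    · rw [coeff_pr, if_neg, mul_zero]
      intro hj
      apply hn
      simp only at hij hj
      rw [← hij]; push_cast; rw [hi, hj]; ring
    · simp [ha i hi]

lemma Cl_iff {c : ZMod 5} {f : K} : Cl c f ↔ pr c f = f :=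
  ⟨pr_self, fun h => h ▸ Cl_pr c f⟩

lemma Cl_mul {c d : ZMod 5} {f g : K} (hf : Cl c f) (hg : Cl d g) : Cl (c + d) (f * g) := by
  rw [Cl_iff, pr_mul hf, add_sub_cancel_left, pr_self hg]

lemma Cl_add {c : ZMod 5} {f g : K} (hf : Cl c f) (hg : Cl c g) : Cl c (f + g) := by
  intro n hn; rw [map_add, hf n hn, hg n hn, add_zero]
lemma Cl_sub {c : ZMod 5} {f g : K} (hf : Cl c f) (hg : Cl c g) : Cl c (f - g) := by
  intro n hn; rw [map_sub, hf n hn, hg n hn, sub_zero]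
lemma Cl_neg {c : ZMod 5} {f : K} (hf : Cl c f) : Cl c (-f) := by
  intro n hn; rw [map_neg, hf n hn, neg_zero]
lemma Cl_C (a : ZMod 5) : Cl 0 (C a : K) := by
  intro n hn
  rw [coeff_C, if_neg]
  rintro rfl
  simp at hn
lemma Cl_one : Cl 0 (1 : K) := by
  have := Cl_C 1
  rwa [map_one] at this
lemma Cl_two : Cl 0 (2 : K) := by
  have := Cl_C 2
  rwa [map_ofNat] at this
lemma Cl_X_pow (n : ℕ) : Cl n (X ^ n : K) := by
  intro m hm
  rw [coeff_X_pow, if_neg]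
  rintro rfl
  exact hm rfl

lemma Cl_pow {c : ZMod 5} {f : K} (hf : Cl c f) (n : ℕ) : Cl (n * c) (f ^ n) := by
  induction n with
  | zero => simpa using Cl_one
  | succ n ih =>
    rw [pow_succ]
    have := Cl_mul ih hf
    rwa [show (n : ZMod 5) * c + c = ((n + 1 : ℕ) : ZMod 5) * c by push_cast; ring] at this

lemma Cl_pow5 (f : K) : Cl 0 (f ^ 5) := by
  intro n hn
  rw [coeff_pow5, if_neg]
  intro h
  exact hn ((ZMod.natCast_eq_zero_iff n 5).mpr h)

lemma Cl_inv {f : K} (hf : Cl 0 f) (h0 : constantCoeff f ≠ 0) : Cl 0 f⁻¹ := by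
  have h := PowerSeries.mul_inv_cancel f h0
  have h1 := pr_mul hf 0 f⁻¹
  rw [h, pr_self Cl_one, sub_zero] at h1
  rw [Cl_iff]
  linear_combination (-pr 0 f⁻¹) * h - f⁻¹ * h1

lemma coeff_phi (f : K) (n : ℕ) : coeff n (phi f) = if 3 ∣ n then coeff (n / 3) f else 0 := by
  split_ifs with h
  · obtain ⟨m, rfl⟩ := h
    rw [Nat.mul_div_cancel_left _ (by norm_num)]
    exact PowerSeries.coeff_expand_mul 3 (by norm_num) f m
  · exact PowerSeries.coeff_expand_of_not_dvd 3 (by norm_num) f h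

lemma Cl_phi {c : ZMod 5} {f : K} (hf : Cl c f) : Cl (3 * c) (phi f) := by
  intro n hn
  rw [coeff_phi]
  split_ifs with h
  · obtain ⟨m, rfl⟩ := h
    rw [Nat.mul_div_cancel_left _ (by norm_num)]
    apply hf
    rintro rfl
    exact hn (by push_cast; rfl)
  · rfl

lemma pr_tsum {ι : Type*} (f : ι → K) (hs : Summable f) (c : ZMod 5) :
    pr c (∑' i, f i) = ∑' i, pr c (f i) := by
  have : HasSum (fun i => pr c (f i)) (pr c (∑' i, f i)) := by
    rw [PowerSeries.WithPiTopology.hasSum_iff_hasSum_coeff]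
    intro d
    simp only [coeff_pr]
    split_ifs with h
    · exact (PowerSeries.WithPiTopology.hasSum_iff_hasSum_coeff (ZMod 5)).mp hs.hasSum d
    · exact hasSum_zero
  exact this.tsum_eq.symm

lemma sum_pr (f : K) : f = pr 0 f + pr 1 f + pr 2 f + pr 3 f + pr 4 f := by
  ext n
  simp only [map_add, coeff_pr]
  generalize (n : ZMod 5) = m
  revert m
  intro m
  have : m = 0 ∨ m = 1 ∨ m = 2 ∨ m = 3 ∨ m = 4 := by revert m; decide
  rcases this with rfl | rfl | rfl | rfl | rfl <;> simp +decide

/-! ### derivation -/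

def th (f : K) : K := X * d⁄dX (ZMod 5) f

lemma coeff_th (f : K) (n : ℕ) : coeff n (th f) = n * coeff n f := by
  unfold th
  cases n with
  | zero => simp
  | succ n =>
    rw [coeff_succ_X_mul, coeff_derivative]
    push_cast
    ring

lemma th_mul (f g : K) : th (f * g) = f * th g + th f * g := by
  unfold th
  rw [Derivation.leibniz]
  simp only [smul_eq_mul]
  ring

lemma th_sub (f g : K) : th (f - g) = th f - th g := by
  unfold th; rw [map_sub]; ring
lemma th_add (f g : K) : th (f + g) = th f + th g := by
  unfold th; rw [map_add]; ring

lemma th_dvd (f : K) (n : ℕ) (h : X ^ n ∣ f) : X ^ n ∣ th f := by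
  rw [X_pow_dvd_iff] at *
  intro m hm
  rw [coeff_th, h m hm, mul_zero]

lemma th_Cl {c : ZMod 5} {f : K} (hf : Cl c f) : th f = C c * f := by
  ext n
  rw [coeff_th, coeff_C_mul]
  by_cases h : (n : ZMod 5) = c
  · rw [h]
  · rw [hf n h]; simp

lemma th_X_pow (n : ℕ) : th (X ^ n) = (n : K) * X ^ n := by
  rw [th_Cl (Cl_X_pow n), map_natCast]

lemma th_P (n : ℕ) : th (P n) = - P n * ∑ i ∈ range (n + 1), vv i * X ^ i := by
  induction n with
  | zero => 
    rw [P_zero, th_Cl Cl_one]; simp [vv]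
  | succ n ih =>
    rw [P_succ, th_mul, ih, sum_range_succ _ (n + 1), th_sub, th_X_pow, th_Cl Cl_one]
    have := vv_eq (n + 1)
    rw [map_zero, ← this]
    ring

lemma ss_E : ss * E = - th E := by
  apply eq_of_dvd
  intro n
  have h1 : X ^ n ∣ P n - E := (pow_dvd_pow _ (by omega)).trans (P_sub_E n)
  have h2 := th_dvd _ _ h1
  rw [th_sub, th_P] at h2
  have h3 : X ^ n ∣ ss - ∑ i ∈ range (n + 1), vv i * X ^ i := by
    have := ss_summable.sum_add_tsum_nat_add (n + 1)
    have e : ss - ∑ i ∈ range (n + 1), vv i * X ^ i = ∑' i, vv (i + (n + 1)) * X ^ (i + (n + 1)) := by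
      rw [ss, ← this]; ring
    rw [e]
    exact dvd_tsum _ _ fun i => Dvd.dvd.mul_left (pow_dvd_pow _ (by omega)) _
  have e : ss * E - -th E = -ss * (P n - E) + P n * (ss - ∑ i ∈ range (n + 1), vv i * X ^ i)
    - (-P n * ∑ i ∈ range (n + 1), vv i * X ^ i - th E) := by ring
  rw [e]
  exact dvd_sub (dvd_add (h1.mul_left _) (h3.mul_left _)) h2


lemma five_zero : (5 : K) = 0 := by
  have := CharP.cast_eq_zero K 5
  exact_mod_cast this

lemma Cl_neg_one_pow (n : ℕ) : Cl 0 ((-1) ^ n : K) := by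
  have := Cl_pow (Cl_neg Cl_one) n
  rwa [mul_zero] at this

lemma Cl_sg (k : ℤ) : Cl 0 (sg k) := by
  have := Cl_C ((Int.negOnePow k : ℤ) : ZMod 5)
  rwa [map_intCast] at this

lemma Cl_natCast (n : ℕ) : Cl 0 (n : K) := by
  have := Cl_C (n : ZMod 5)
  rwa [map_natCast] at this

/-! ### classes of the pentagonal series -/

lemma pent_class (k : ℤ) : ((pentagonal k : ℕ) : ZMod 5) = 0 ∨ ((pentagonal k : ℕ) : ZMod 5) = 2 ∨
    (((pentagonal k : ℕ) : ZMod 5) = 1 ∧ (k : ZMod 5) = 1) := by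
  have h := congrArg (Int.cast : ℤ → ZMod 5) (two_mul_natCast_pentagonal k)
  push_cast at h
  generalize ((pentagonal k : ℕ) : ZMod 5) = a at *
  generalize (k : ZMod 5) = b at *
  revert a b
  decide

lemma pent_one (k : ℤ) (h : (k : ZMod 5) = 1) : ((pentagonal k : ℕ) : ZMod 5) = 1 := by
  have h2 := congrArg (Int.cast : ℤ → ZMod 5) (two_mul_natCast_pentagonal k)
  push_cast at h2
  rw [h] at h2
  generalize ((pentagonal k : ℕ) : ZMod 5) = a at *
  revert a
  decide

lemma Cl_pt (k : ℤ) : Cl (pentagonal k : ℕ) (sg k * X ^ pentagonal k : K) := by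
  have := Cl_mul (Cl_sg k) (Cl_X_pow (pentagonal k))
  rwa [zero_add] at this

lemma pr_E_zero (c : ZMod 5) (hc : c = 3 ∨ c = 4) : pr c E = 0 := by
  rw [← E_hasSum.tsum_eq, pr_tsum _ E_hasSum.summable]
  have : ∀ k : ℤ, pr c (sg k * X ^ pentagonal k : K) = 0 := by
    intro k
    apply pr_ne (Cl_pt k)
    rcases pent_class k with h | h | h <;> rcases hc with rfl | rfl
    all_goals (first | rw [h] | rw [h.1]); decide
  simp [this]

def frob : K →+* K := iterateFrobenius K 5 2

lemma frob_apply (f : K) : frob f = f ^ 25 := by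
  simp [frob, iterateFrobenius_def]

lemma continuous_frob : Continuous frob := by
  have : ∀ d, Continuous fun f : K => coeff d (frob f) := by
    intro d
    simp only [frob_apply, coeff_pow25]
    split_ifs
    · exact PowerSeries.WithPiTopology.continuous_coeff (ZMod 5) _
    · exact continuous_const
  rw [continuous_iff_continuousAt]
  intro f
  unfold ContinuousAt
  rw [PowerSeries.WithPiTopology.tendsto_iff_coeff_tendsto]
  intro d
  exact (this d).tendsto f

lemma sg_pow25 (k : ℤ) : sg k ^ 25 = sg k := by
  have h := sg_sq k
  have : sg k ^ 25 = (sg k * sg k) ^ 12 * sg k := by ring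
  rw [this, h]; ring

lemma pr_E_one : pr 1 E = - (X * E ^ 25) := by
  have h1 : HasSum (fun l : ℤ => -X * frob (sg l * X ^ pentagonal l)) (-X * E ^ 25) := by
    rw [← frob_apply]
    exact (E_hasSum.map frob continuous_frob).mul_left (-X)
  let g : ℤ → ℤ := fun l => 1 - 5 * l
  have hg : Function.Injective g := by
    intro a b h
    simp only [g] at h
    omega
  have h2 : ∀ l : ℤ, pr 1 (sg (g l) * X ^ pentagonal (g l) : K)
      = -X * frob (sg l * X ^ pentagonal l) := by
    intro l
    have hp : pentagonal (1 - 5 * l) = 1 + 25 * pentagonal l := by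
      have q1 := two_mul_natCast_pentagonal (1 - 5 * l)
      have q2 := two_mul_natCast_pentagonal l
      zify; linarith
    have hsg : sg (1 - 5 * l) = - sg l := by
      rw [show (1 - 5 * l : ℤ) = 1 - (l + l + (l + l) + l) by ring, sg_sub, sg_add, sg_add, sg_add,
        sg_one, sg_sq]
      ring
    have hc := Cl_pt (1 - 5 * l)
    rw [hp] at hc
    have e : (((1 + 25 * pentagonal l : ℕ)) : ZMod 5) = 1 := by
      push_cast
      rw [show (25 : ZMod 5) = 0 by decide]; ring
    rw [e] at hc
    simp only [g]
    rw [hp, pr_self hc, hsg, frob_apply, mul_pow, sg_pow25]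
    ring
  rw [← E_hasSum.tsum_eq, pr_tsum _ E_hasSum.summable, E_hasSum.tsum_eq, ← neg_mul, ← h1.tsum_eq,
    ← hg.tsum_eq]
  · simp only [h2]
  · intro k hk
    simp only [Function.mem_support] at hk
    have h3 : ((pentagonal k : ℕ) : ZMod 5) = 1 := by
      by_contra hne
      exact hk (pr_ne (Cl_pt k) hne)
    have h4 : (k : ZMod 5) = 1 := by
      rcases pent_class k with h | h | h
      · rw [h] at h3; exact absurd h3 (by decide)
      · rw [h] at h3; exact absurd h3 (by decide)
      · exact h.2
    have h5 : ((k - 1 : ℤ) : ZMod 5) = 0 := by push_cast; rw [h4]; ring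
    obtain ⟨m, hm⟩ := (ZMod.intCast_zmod_eq_zero_iff_dvd _ 5).mp h5
    refine ⟨-m, ?_⟩
    simp only [g]
    push_cast at hm
    omega

/-! ### Jacobi -/

lemma pr_E3 : pr 2 (E ^ 3) = 0 := by
  have hs : Summable fun s : ℕ => ((-1) ^ s * (2 * (s : K) + 1) * X ^ T s : K) :=
    summN _ fun s => Dvd.dvd.mul_left (pow_dvd_pow _ (le_T s)) _
  rw [jacobi, pr_tsum _ hs]
  have : ∀ s : ℕ, pr 2 ((-1) ^ s * (2 * (s : K) + 1) * X ^ T s : K) = 0 := by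
    intro s
    have hc : Cl (0 + 0 + (T s : ℕ)) ((-1) ^ s * (2 * (s : K) + 1) * X ^ T s : K) := by
      refine Cl_mul (Cl_mul (Cl_neg_one_pow s) ?_) (Cl_X_pow _)
      have := Cl_natCast (2 * s + 1)
      push_cast at this
      exact this
    apply pr_ne hc
    have h := congrArg (Nat.cast : ℕ → ZMod 5) (two_T s)
    push_cast at h
    clear hc
    generalize ((T s : ℕ) : ZMod 5) = a at *
    generalize (s : ZMod 5) = b at *
    revert a b
    decide
  simp [this]

/-! ### parametrization -/

def e0 : K := pr 0 E
def e1 : K := pr 1 E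
def e2 : K := pr 2 E

lemma E_split : E = e0 + e1 + e2 := by
  have := sum_pr E
  rw [pr_E_zero 3 (Or.inl rfl), pr_E_zero 4 (Or.inr rfl), add_zero, add_zero] at this
  exact this

lemma Cl_e0 : Cl 0 e0 := Cl_pr _ _
lemma Cl_e1 : Cl 1 e1 := Cl_pr _ _
lemma Cl_e2 : Cl 2 e2 := Cl_pr _ _

lemma e0_const : constantCoeff e0 = 1 := by
  rw [← coeff_zero_eq_constantCoeff_apply, e0, coeff_pr, if_pos (by simp),
    coeff_zero_eq_constantCoeff_apply, E_const]

lemma e0_ne : e0 ≠ 0 := by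
  intro h
  have := e0_const
  rw [h] at this
  simp at this

/-- monomials in three graded elements -/
lemma Cl_mono {x y : K} {c d : ZMod 5} (hx : Cl c x) (hy : Cl d y) (i j : ℕ) :
    Cl (i * c + j * d) (x ^ i * y ^ j) := Cl_mul (Cl_pow hx i) (Cl_pow hy j)

lemma e_rel : e0 * e2 = - e1 ^ 2 := by
  have h := pr_E3
  have ex : E ^ 3 = 3 * e0 * (e0 * e2 + e1 ^ 2) + (e0 ^ 3 + 3 * (e1 * e2 ^ 2))
      + (3 * (e0 ^ 2 * e1) + e2 ^ 3) + (e1 ^ 3 + 6 * (e0 * (e1 * e2)))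
      + (3 * (e1 ^ 2 * e2) + 3 * (e0 * e2 ^ 2)) := by
    rw [E_split]; ring
  have c3 : Cl 0 (3 : K) := by have := Cl_natCast 3; exact_mod_cast this
  have c6 : Cl 0 (6 : K) := by have := Cl_natCast 6; exact_mod_cast this
  have a0 : Cl 2 (3 * e0 * (e0 * e2 + e1 ^ 2)) :=
    Cl_mul (c := 0) (d := 2) (Cl_mul (c := 0) (d := 0) c3 Cl_e0)
      (Cl_add (Cl_mul (c := 0) (d := 2) Cl_e0 Cl_e2) (Cl_pow Cl_e1 2))
  have a1 : Cl 0 (e0 ^ 3 + 3 * (e1 * e2 ^ 2)) :=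
    Cl_add (Cl_pow Cl_e0 3) (Cl_mul (c := 0) (d := 0) c3 (Cl_mul (c := 1) (d := 4) Cl_e1 (Cl_pow Cl_e2 2)))
  have a2 : Cl 1 (3 * (e0 ^ 2 * e1) + e2 ^ 3) :=
    Cl_add (Cl_mul (c := 0) (d := 1) c3 (Cl_mul (c := 0) (d := 1) (Cl_pow Cl_e0 2) Cl_e1)) (Cl_pow Cl_e2 3)
  have a3 : Cl 3 (e1 ^ 3 + 6 * (e0 * (e1 * e2))) :=
    Cl_add (Cl_pow Cl_e1 3) (Cl_mul (c := 0) (d := 3) c6 (Cl_mul (c := 0) (d := 3) Cl_e0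
      (Cl_mul (c := 1) (d := 2) Cl_e1 Cl_e2)))
  have a4 : Cl 4 (3 * (e1 ^ 2 * e2) + 3 * (e0 * e2 ^ 2)) :=
    Cl_add (Cl_mul (c := 0) (d := 4) c3 (Cl_mul (c := 2) (d := 2) (Cl_pow Cl_e1 2) Cl_e2))
      (Cl_mul (c := 0) (d := 4) c3 (Cl_mul (c := 0) (d := 4) Cl_e0 (Cl_pow Cl_e2 2)))
  rw [ex, pr_add, pr_add, pr_add, pr_add, pr_self a0, pr_ne a1 (by decide), pr_ne a2 (by decide),
    pr_ne a3 (by decide), pr_ne a4 (by decide)] at h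
  apply mul_left_cancel₀ e0_ne
  linear_combination 2 * h - e0 * (e0 * e2 + e1 ^ 2) * five_zero


def ei : K := e0⁻¹

lemma e0_ei : e0 * ei = 1 := PowerSeries.mul_inv_cancel _ (by rw [e0_const]; exact one_ne_zero)

lemma Cl_ei : Cl 0 ei := Cl_inv Cl_e0 (by rw [e0_const]; exact one_ne_zero)

def uu : K := 2 * e1 * ei

lemma Cl_uu : Cl 1 uu :=
  Cl_mul (c := 1) (d := 0) (Cl_mul (c := 0) (d := 1) Cl_two Cl_e1) Cl_ei

lemma e0_uu : e0 * uu = 2 * e1 := by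
  unfold uu; linear_combination 2 * e1 * e0_ei

lemma E_uu : E = e0 * (1 - uu) ^ 2 := by
  apply mul_left_cancel₀ e0_ne
  rw [E_split]
  linear_combination e_rel + (2 * e0 - e0 * uu - 2 * e1) * e0_uu + (e0 * e1 - e1 ^ 2) * five_zero

lemma XE : X * E ^ 25 = 2 * uu * e0 := by
  have h : e1 = - (X * E ^ 25) := pr_E_one
  linear_combination h - 2 * e0_uu - e1 * five_zero

def vv3 : K := phi uu
def e3 : K := phi e0

lemma Cl_vv3 : Cl 3 vv3 := by
  have := Cl_phi Cl_uu
  rwa [mul_one] at this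
lemma Cl_e3 : Cl 0 e3 := by
  have := Cl_phi Cl_e0
  rwa [mul_zero] at this

lemma e3_const : constantCoeff e3 = 1 := by
  rw [← coeff_zero_eq_constantCoeff_apply, e3, coeff_phi, if_pos (by simp),
    coeff_zero_eq_constantCoeff_apply, e0_const]

lemma e3_ne : e3 ≠ 0 := by
  intro h
  have := e3_const
  rw [h] at this
  simp at this

lemma phiE : phi E = e3 * (1 - vv3) ^ 2 := by
  have := congrArg phi E_uu
  simpa [map_mul, map_pow, map_sub, e3, vv3] using this

lemma XphiE : X ^ 3 * phi E ^ 25 = 2 * vv3 * e3 := by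
  have := congrArg phi XE
  simpa only [map_mul, map_pow, phi_X, map_ofNat, vv3, e3] using this

lemma one_sub_pow5 (x : K) : (1 - x) ^ 5 = 1 - x ^ 5 := by
  rw [sub_pow_char, one_pow]

lemma one_sub_pow4 (x : K) : (1 - x) ^ 4 = 1 + x + x ^ 2 + x ^ 3 + x ^ 4 := by
  linear_combination (-x + x ^ 2 - x ^ 3) * five_zero

lemma E_coeff_one : coeff 1 E = -1 := by
  have h := X_pow_dvd_iff.mp (P_sub_E 1) 1 (by norm_num)
  rw [map_sub, sub_eq_zero] at h
  rw [← h]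
  simp [P, coeff_one]

lemma E_dvd : X ^ 1 ∣ E - 1 := by
  have := P_sub_E 0
  rw [P_zero] at this
  exact (dvd_sub_comm).mp this

lemma uu_zero : coeff 0 uu = 0 := Cl_uu 0 (by simp)

lemma uu_one : coeff 1 uu ≠ 0 := by
  intro h
  have h1 := congrArg (coeff 1) e0_uu
  rw [coeff_mul, Finset.Nat.antidiagonal_succ] at h1
  simp [h, uu_zero] at h1
  have h2 : coeff 1 e1 = -1 := by
    rw [e1, coeff_pr, if_pos (by simp), E_coeff_one]
  have h3 : (2 : K) * e1 = C 2 * e1 := by rw [map_ofNat]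
  rw [h3, coeff_C_mul, h2] at h1
  revert h1
  decide

lemma uu_ne : uu ≠ 0 := fun h => uu_one (by rw [h]; simp)

lemma uu_ne_vv3 : uu - vv3 ^ 2 ≠ 0 := by
  intro h
  have h1 := congrArg (coeff 1) h
  have h2 : coeff 1 (vv3 ^ 2) = 0 := by
    rw [vv3, ← map_pow, coeff_phi, if_neg (by norm_num)]
  rw [map_sub, h2, sub_zero] at h1
  exact uu_one (by simpa using h1)

/-! ### third class of `cc` -/

lemma pr_cc : pr 3 cc = X ^ 8 * cc ^ 25 := by
  ext n
  rw [coeff_pr, coeff_X_pow_mul', coeff_pow25]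
  have hn : (n : ZMod 5) = 3 ↔ n % 5 = 3 := by
    have := ZMod.natCast_eq_natCast_iff n 3 5
    rw [show ((3 : ℕ) : ZMod 5) = 3 by rfl] at this
    rw [this]; rfl
  by_cases h : n % 25 = 8
  · have h1 : n % 5 = 3 := by omega
    obtain ⟨m, rfl⟩ : ∃ m, n = 25 * m + 8 := ⟨n / 25, by omega⟩
    rw [if_pos (hn.mpr h1), if_pos (by omega), if_pos (by omega), coeff_cc_25]
    congr 2
    omega
  · by_cases h1 : n % 5 = 3
    · rw [if_pos (hn.mpr h1), coeff_cc_zero n h1 h]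
      split_ifs <;> first | rfl | omega
    · rw [if_neg (fun h' => h1 (hn.mp h'))]
      split_ifs <;> first | rfl | omega

lemma Cl_mono_uv (i j : ℕ) : Cl (i * 1 + j * 3) (uu ^ i * vv3 ^ j) := Cl_mono Cl_uu Cl_vv3 i j

lemma Cl_0_w : Cl 0 (e3 ^ 3 * (1 - vv3 ^ 5)) :=
  Cl_mul (c := 0) (d := 0) (Cl_pow Cl_e3 3) (Cl_sub Cl_one (Cl_pow5 _))

lemma Cl_0_u5 : Cl 0 (1 - uu ^ 5) := Cl_sub Cl_one (Cl_pow5 _)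

lemma pow5_const (f : K) (h : coeff 0 f = 0) : constantCoeff (1 - f ^ 5) = 1 := by
  rw [map_sub, map_pow, ← coeff_zero_eq_constantCoeff_apply (φ := f), h]
  simp

lemma one_sub_u5_ne : 1 - uu ^ 5 ≠ 0 := by
  intro h
  have := pow5_const uu uu_zero
  rw [h] at this
  simp at this

lemma vv3_zero : coeff 0 vv3 = 0 := Cl_vv3 0 (by decide)

lemma one_sub_v5_ne : 1 - vv3 ^ 5 ≠ 0 := by
  intro h
  have := pow5_const vv3 vv3_zero
  rw [h] at this
  simp at this

lemma pr_uv (c : ZMod 5) (i j : ℕ) : pr c (uu ^ i * vv3 ^ j) =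
    if ((i : ZMod 5) * 1 + j * 3) = c then uu ^ i * vv3 ^ j else 0 := by
  split_ifs with h
  · exact pr_self (h ▸ Cl_mono_uv i j)
  · exact pr_ne (Cl_mono_uv i j) h

lemma pr_three_mul (c : ZMod 5) (f : K) : pr c (3 * f) = 3 * pr c f := by
  have c3 : Cl 0 (3 : K) := by have := Cl_natCast 3; exact_mod_cast this
  have := pr_mul c3 c f
  rwa [sub_zero] at this
lemma pr_two_mul (c : ZMod 5) (f : K) : pr c (2 * f) = 2 * pr c f := by
  have := pr_mul Cl_two c f
  rwa [sub_zero] at this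

lemma cc_class : (1 - uu ^ 5) * e0 * pr 3 cc = - (e3 ^ 3 * (1 - vv3 ^ 5)) * (uu ^ 3 + vv3) := by
  have h := cc_E
  rw [phiE, E_uu] at h
  have h1 : (1 - uu ^ 5) * e0 * cc = e3 ^ 3 * (1 - vv3 ^ 5) * ((1 - vv3) * (1 - uu) ^ 3) := by
    rw [← one_sub_pow5, ← one_sub_pow5]
    linear_combination (1 - uu) ^ 3 * h
  have h2 := congrArg (pr 3) h1
  have hc : Cl 0 ((1 - uu ^ 5) * e0) := Cl_mul (c := 0) (d := 0) Cl_0_u5 Cl_e0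
  rw [pr_mul hc, pr_mul Cl_0_w, sub_zero] at h2
  have ex : (1 - vv3) * (1 - uu) ^ 3 = uu ^ 0 * vv3 ^ 0 - 3 * (uu ^ 1 * vv3 ^ 0)
    + 3 * (uu ^ 2 * vv3 ^ 0) - uu ^ 3 * vv3 ^ 0 - uu ^ 0 * vv3 ^ 1 + 3 * (uu ^ 1 * vv3 ^ 1)
    - 3 * (uu ^ 2 * vv3 ^ 1) + uu ^ 3 * vv3 ^ 1 := by ring
  have h3 : pr 3 ((1 - vv3) * (1 - uu) ^ 3) = - (uu ^ 3 + vv3) := by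
    rw [ex]
    simp only [pr_add, pr_sub, pr_three_mul, pr_uv]
    simp +decide
    ring
  rw [h2, h3]
  ring

lemma cc_class2 : pr 3 cc * (uu * e0) = - vv3 ^ 3 * e3 ^ 3 := by
  have h := congrArg (fun f => f ^ 25) cc_E
  have h1 : pr 3 cc * (2 * uu * e0) = (2 * vv3 * e3) ^ 3 := by
    rw [pr_cc, ← XE, ← XphiE]
    linear_combination X ^ 9 * h
  linear_combination 3 * h1 - (pr 3 cc * uu * e0 - 5 * vv3 ^ 3 * e3 ^ 3) * five_zero

def Rel : K := vv3 + uu ^ 3 + uu ^ 2 * vv3 ^ 2 + uu * vv3 ^ 4 + uu ^ 4 * vv3 ^ 3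

lemma Rel_zero : Rel = 0 := by
  have h1 := cc_class
  have h2 := cc_class2
  have h3 : e3 ^ 3 * ((uu - vv3 ^ 2) * Rel) = 0 := by
    unfold Rel
    linear_combination uu * h1 - (1 - uu ^ 5) * h2
  have h4 := (mul_eq_zero.mp h3).resolve_left (pow_ne_zero 3 e3_ne)
  exact (mul_eq_zero.mp h4).resolve_left uu_ne_vv3

/-! ### fourth class of `DD * E^2` -/

lemma pr_H : pr 4 (DD * E ^ 2) = 0 := by
  have hs : Summable fun s : ℕ =>
      ((-1) ^ s * (2 * (s : K) + 1) * X ^ (T s + s + 1) * aa (2 * s + 1) : K) :=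
    summN _ fun s => Dvd.dvd.mul_right (Dvd.dvd.mul_left (pow_dvd_pow _ (by omega)) _) _
  rw [DD_E2, pr_tsum _ hs]
  have : ∀ s : ℕ, pr 4 ((-1) ^ s * (2 * (s : K) + 1) * X ^ (T s + s + 1) * aa (2 * s + 1) : K) = 0 := by
    intro s
    by_cases h0 : (2 * (s : ZMod 5) + 1) = 0
    · have : (2 * (s : K) + 1) = 0 := by
        have := congrArg (C (R := ZMod 5)) h0
        simpa only [map_add, map_mul, map_ofNat, map_natCast, map_one, map_zero] using this
      rw [this]
      ext n
      simp [coeff_pr]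
    · have hc : Cl (0 + 0 + (T s + s + 1 : ℕ)) ((-1) ^ s * (2 * (s : K) + 1) * X ^ (T s + s + 1) : K) := by
        refine Cl_mul (Cl_mul (Cl_neg_one_pow s) ?_) (Cl_X_pow _)
        have := Cl_natCast (2 * s + 1)
        push_cast at this
        exact this
      rw [pr_mul hc, aa, pr_tsum _ (aa_summable _)]
      have : ∀ j : ℕ, pr (4 - (0 + 0 + (T s + s + 1 : ℕ)))
          ((-1) ^ j * X ^ (T j + (2 * s + 1) * j) : K) = 0 := by
        intro j
        apply pr_ne (Cl_mul (Cl_neg_one_pow j) (Cl_X_pow _))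
        clear hc
        have h := congrArg (Nat.cast : ℕ → ZMod 5) (two_T s)
        have h' := congrArg (Nat.cast : ℕ → ZMod 5) (two_T j)
        push_cast at h h' ⊢
        generalize ((T s : ℕ) : ZMod 5) = a at *
        generalize (s : ZMod 5) = b at *
        generalize ((T j : ℕ) : ZMod 5) = c at *
        generalize (j : ZMod 5) = d at *
        have ha : a = 3 * (b * (b + 1)) := by
          rw [← h, ← mul_assoc, show (3 * 2 : ZMod 5) = 1 by decide, one_mul]
        have hc : c = 3 * (d * (d + 1)) := by
          rw [← h', ← mul_assoc, show (3 * 2 : ZMod 5) = 1 by decide, one_mul]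
        clear h h'
        subst ha hc
        revert b d
        decide
      simp only [this, tsum_zero, mul_zero]
  simp only [this, tsum_zero]

/-! ### the conclusion for `DD / E` -/

def SS : K := DD * Ri

lemma SS_E : SS * E = DD := by
  unfold SS; linear_combination DD * E_mul_Ri

lemma SS_phi : SS * phi E ^ 3 = ss + phi (CC - ss) := by
  have h := I4
  rw [Lam_eq, ← SS_E] at h
  apply mul_left_cancel₀ E_ne_zero
  rw [map_sub]
  linear_combination h

lemma ss_uu : ss * (1 - uu) = 2 * uu := by
  have h := ss_E
  have h2 : th E = C 1 * e1 + C 2 * e2 := by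
    rw [E_split, th_add, th_add, th_Cl Cl_e0, th_Cl Cl_e1, th_Cl Cl_e2]; simp
  rw [map_one, map_ofNat] at h2
  rw [h2] at h
  have hne : e0 * (1 - uu) ≠ 0 := by
    intro h0
    have : E = 0 := by rw [E_uu]; linear_combination (1 - uu) * h0
    exact E_ne_zero this
  have h3 : e2 = e0 * uu ^ 2 := by
    have := E_uu
    rw [E_split] at this
    linear_combination this - 2 * e0_uu - e1 * five_zero
  apply mul_left_cancel₀ hne
  rw [h3] at h
  rw [E_uu] at h
  linear_combination h + 3 * e0_uu + e1 * five_zero - uu * e0 * five_zero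

def Gam : K := phi ((1 + uu + uu ^ 2 + uu ^ 3 + uu ^ 4) * (CC - ss))

def WW : K := e3 ^ 3 * (1 - vv3 ^ 5) ^ 2

lemma Cl_WW : Cl 0 WW :=
  Cl_mul (c := 0) (d := 0) (Cl_pow Cl_e3 3) (Cl_pow (Cl_sub Cl_one (Cl_pow5 _)) 2)

lemma WW_ne : WW ≠ 0 := mul_ne_zero (pow_ne_zero _ e3_ne) (pow_ne_zero _ one_sub_v5_ne)

lemma SS_WW : SS * WW * (1 - uu) =
    2 * (uu * (1 + vv3 + vv3 ^ 2 + vv3 ^ 3 + vv3 ^ 4)) + (1 - uu) * Gam := by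
  have h := SS_phi
  have hG : Gam = (1 + vv3 + vv3 ^ 2 + vv3 ^ 3 + vv3 ^ 4) * phi (CC - ss) := by
    simp only [Gam, vv3, map_mul, map_add, map_pow, map_one]
  rw [phiE] at h
  rw [hG, WW, ← one_sub_pow5, ← one_sub_pow4]
  linear_combination (1 - uu) * (1 - vv3) ^ 4 * h + (1 - vv3) ^ 4 * ss_uu

lemma H_WW : WW * (DD * E ^ 2) = e0 ^ 3 * (1 - uu ^ 5) *
    (2 * (uu * (1 + vv3 + vv3 ^ 2 + vv3 ^ 3 + vv3 ^ 4)) + (1 - uu) * Gam) := by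
  rw [← SS_WW, ← SS_E, E_uu, ← one_sub_pow5]
  ring

lemma pr_uN : pr 4 (uu * (1 + vv3 + vv3 ^ 2 + vv3 ^ 3 + vv3 ^ 4)) = uu * vv3 := by
  have ex : uu * (1 + vv3 + vv3 ^ 2 + vv3 ^ 3 + vv3 ^ 4) = uu ^ 1 * vv3 ^ 0 + uu ^ 1 * vv3 ^ 1
    + uu ^ 1 * vv3 ^ 2 + uu ^ 1 * vv3 ^ 3 + uu ^ 1 * vv3 ^ 4 := by ring
  rw [ex]
  simp only [pr_add, pr_uv]
  simp +decide

lemma Gam_rel : uu * (pr 3 Gam - 2 * vv3) = pr 4 Gam := by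
  have h := congrArg (pr 4) H_WW
  have hc : Cl 0 (e0 ^ 3 * (1 - uu ^ 5)) := Cl_mul (c := 0) (d := 0) (Cl_pow Cl_e0 3) Cl_0_u5
  rw [pr_mul Cl_WW, sub_zero, pr_H, mul_zero, pr_mul hc, sub_zero] at h
  have h2 := (mul_eq_zero.mp h.symm).resolve_left
    (mul_ne_zero (pow_ne_zero _ e0_ne) one_sub_u5_ne)
  rw [pr_add, pr_two_mul, pr_uN, sub_mul, one_mul, pr_sub, pr_mul Cl_uu,
    show (4 - 1 : ZMod 5) = 3 by decide] at h2
  linear_combination -h2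

lemma order_arg (A B : K) (hA : ∀ n, ¬ 3 ∣ n → coeff n A = 0) (hB : ∀ n, ¬ 3 ∣ n → coeff n B = 0)
    (h : uu * A = B) : A = 0 := by
  by_contra hne
  obtain ⟨n, hn⟩ : ∃ n, coeff n A ≠ 0 := by
    by_contra hc
    push Not at hc
    exact hne (by ext n; simp [hc n])
  classical
  have hex : ∃ n, coeff n A ≠ 0 := ⟨n, hn⟩
  set m := Nat.find hex with hm
  have h1 : coeff m A ≠ 0 := Nat.find_spec hex
  have h2 : ∀ k < m, coeff k A = 0 := fun k hk => by
    have := Nat.find_min hex hk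
    simpa using this
  have h3 : 3 ∣ m := by
    by_contra h3; exact h1 (hA m h3)
  have h4 : coeff (m + 1) (uu * A) = coeff 1 uu * coeff m A := by
    rw [coeff_mul]
    rw [Finset.sum_eq_single (1, m)]
    · rintro ⟨i, j⟩ hij hne
      rw [Finset.HasAntidiagonal.mem_antidiagonal] at hij
      simp only at hij
      rcases lt_or_ge j m with hj | hj
      · simp [h2 j hj]
      · have : i = 0 ∨ i = 1 := by omega
        rcases this with rfl | rfl
        · simp only [uu_zero, zero_mul]
        · exact absurd (by simp; omega) hne
    · intro h5
      exact absurd (by rw [Finset.HasAntidiagonal.mem_antidiagonal]; simp only; omega) h5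
  rw [h, hB (m + 1) (by omega)] at h4
  exact (mul_ne_zero uu_one h1) h4.symm

lemma phi_supp (f : K) (n : ℕ) (h : ¬ 3 ∣ n) : coeff n (phi f) = 0 := by
  rw [coeff_phi, if_neg h]

lemma pr_Gam : pr 4 Gam = 0 := by
  have hg : ∀ c n, ¬ 3 ∣ n → coeff n (pr c Gam) = 0 := by
    intro c n hn
    rw [coeff_pr, Gam, phi_supp _ _ hn]; simp
  have h := order_arg (pr 3 Gam - 2 * vv3) (pr 4 Gam) (fun n hn => by
    have : (2 : K) * vv3 = phi (2 * uu) := by rw [map_mul, map_ofNat, vv3]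
    rw [map_sub, hg 3 n hn, this, phi_supp _ _ hn, sub_zero]) (hg 4) Gam_rel
  rw [← Gam_rel, h, mul_zero]

lemma pr_SS : pr 4 SS = 0 := by
  have h1 : WW * (1 - uu ^ 5) * SS = 2 * ((uu + uu ^ 2 + uu ^ 3 + uu ^ 4 + uu ^ 5)
      * (1 + vv3 + vv3 ^ 2 + vv3 ^ 3 + vv3 ^ 4)) + (1 - uu ^ 5) * Gam := by
    have h2 := one_sub_pow4 uu
    rw [← one_sub_pow5]
    linear_combination (1 - uu) ^ 4 * SS_WW + 2 * uu * (1 + vv3 + vv3 ^ 2 + vv3 ^ 3 + vv3 ^ 4) * h2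
  have h2 := congrArg (pr 4) h1
  have hc : Cl 0 (WW * (1 - uu ^ 5)) := Cl_mul (c := 0) (d := 0) Cl_WW Cl_0_u5
  rw [pr_mul hc, sub_zero, pr_add, pr_mul Cl_0_u5, sub_zero, pr_Gam, mul_zero, add_zero,
    pr_two_mul] at h2
  have h3 : pr 4 ((uu + uu ^ 2 + uu ^ 3 + uu ^ 4 + uu ^ 5)
      * (1 + vv3 + vv3 ^ 2 + vv3 ^ 3 + vv3 ^ 4)) = uu * Rel := by
    have ex : (uu + uu ^ 2 + uu ^ 3 + uu ^ 4 + uu ^ 5) * (1 + vv3 + vv3 ^ 2 + vv3 ^ 3 + vv3 ^ 4) =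
      ∑ i ∈ range 5, ∑ j ∈ range 5, uu ^ (i + 1) * vv3 ^ j := by
      simp only [sum_range_succ, sum_range_zero]
      ring
    rw [ex]
    simp only [sum_range_succ, sum_range_zero, zero_add, pr_add, pr_uv, Rel]
    simp +decide
    ring
  rw [h3, Rel_zero, mul_zero, mul_zero] at h2
  exact (mul_eq_zero.mp h2).resolve_left (mul_ne_zero WW_ne one_sub_u5_ne)

lemma coeff_SS (n : ℕ) : coeff (5 * n + 4) SS = 0 := by
  have h := congrArg (coeff (5 * n + 4)) pr_SS
  rw [coeff_pr, if_pos] at h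
  · simpa using h
  · push_cast
    rw [show (5 : ZMod 5) = 0 by decide]; ring


lemma geom_mul (i : ℕ) : (∑' j, X ^ ((i + 1) * j) : K) * (1 - X ^ (i + 1)) = 1 := by
  have hs : Summable fun j : ℕ => (X ^ ((i + 1) * j) : K) :=
    summN _ fun j => pow_dvd_pow _ (Nat.le_mul_of_pos_left j (Nat.succ_pos i))
  have h1 := hs.tsum_eq_zero_add
  have h2 : ∑' j, (X ^ ((i + 1) * (j + 1)) : K) = X ^ (i + 1) * ∑' j, (X ^ ((i + 1) * j) : K) := by
    rw [← hs.tsum_mul_left]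
    refine tsum_congr fun j => ?_
    rw [← pow_add]; ring_nf
  rw [h2] at h1
  simp only [mul_zero, pow_zero] at h1
  linear_combination h1

def gfp (p : ℕ → Prop) [DecidablePred p] : K :=
  PowerSeries.mk fun n => ((#(Nat.Partition.restricted n p) : ℕ) : ZMod 5)

lemma gfp_hasProd (p : ℕ → Prop) [DecidablePred p] :
    HasProd (fun i => if p (i + 1) then (∑' j, X ^ ((i + 1) * j) : K) else 1) (gfp p) :=
  Nat.Partition.hasProd_powerSeriesMk_card_restricted (ZMod 5) p

def GA (m : ℕ) : K := gfp fun x => m + 1 ≤ x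
def GB (m : ℕ) : K := gfp fun x => m + 1 ≤ x ∧ x < 2 * (m + 1)

lemma GA_E (m : ℕ) : GA m * E = P m := by
  have h1 := (gfp_hasProd fun x => m + 1 ≤ x).mul
    (PowerSeries.WithPiTopology.hasProd_one_sub_X_pow (ZMod 5))
  refine h1.unique ?_
  have h2 : HasProd (fun i => if i < m then (1 - X ^ (i + 1) : K) else 1)
      (∏ i ∈ range m, if i < m then (1 - X ^ (i + 1) : K) else 1) :=
    hasProd_prod_of_ne_finset_one (by
      intro i hi
      rw [if_neg (by simpa using hi)])
  have h3 : (∏ i ∈ range m, if i < m then (1 - X ^ (i + 1) : K) else 1) = P m :=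
    prod_congr rfl fun i hi => if_pos (mem_range.mp hi)
  rw [h3] at h2
  convert h2 using 2 with i
  by_cases h : i < m
  · rw [if_neg (by omega), if_pos h, one_mul]
  · rw [if_pos (by omega), if_neg h, geom_mul]

lemma GB_eq (m : ℕ) : GB m = P m * R (2 * m + 1) := by
  have h1 := gfp_hasProd fun x => m + 1 ≤ x ∧ x < 2 * (m + 1)
  have h2 : HasProd (fun i => if m + 1 ≤ i + 1 ∧ i + 1 < 2 * (m + 1) then
      (∑' j, X ^ ((i + 1) * j) : K) else 1) (∏ i ∈ Ico m (2 * m + 1),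
      if m + 1 ≤ i + 1 ∧ i + 1 < 2 * (m + 1) then (∑' j, X ^ ((i + 1) * j) : K) else 1) :=
    hasProd_prod_of_ne_finset_one (by
      intro i hi
      rw [if_neg (by rw [mem_Ico] at hi; omega)])
  have h3 := h1.unique h2
  have h4 : GB m * ∏ i ∈ Ico m (2 * m + 1), (1 - X ^ (i + 1) : K) = 1 := by
    unfold GB
    rw [h3, ← prod_mul_distrib]
    refine prod_eq_one fun i hi => ?_
    rw [mem_Ico] at hi
    rw [if_pos (by omega), geom_mul]
  have h5 : P m * ∏ i ∈ Ico m (2 * m + 1), (1 - X ^ (i + 1) : K) = P (2 * m + 1) :=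
    prod_range_mul_prod_Ico _ (by omega)
  have h6 := P_mul_R (2 * m + 1)
  rw [← h5] at h6
  linear_combination P m * R (2 * m + 1) * h4 - GB m * h6

lemma GAB_summable : Summable fun m => (X ^ (m + 1) * (GA m * GB m) : K) :=
  summN _ fun m => (pow_dvd_pow _ (Nat.le_succ m)).trans (dvd_mul_right _ _)

lemma SS_eq : SS = ∑' m, (X ^ (m + 1) * (GA m * GB m) : K) := by
  apply mul_right_cancel₀ E_ne_zero
  rw [SS_E, ← GAB_summable.tsum_mul_right]
  refine tsum_congr fun m => ?_
  rw [GB_eq]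
  linear_combination (- X ^ (m + 1) * P m * R (2 * m + 1)) * GA_E m

def cnt (N m : ℕ) : ℕ := ∑ ij ∈ antidiagonal (N - (m + 1)),
  #(Nat.Partition.restricted ij.1 fun x => m + 1 ≤ x) *
  #(Nat.Partition.restricted ij.2 fun x => m + 1 ≤ x ∧ x < 2 * (m + 1))

lemma coeff_SS_eq (N : ℕ) : coeff N SS = ((∑ m ∈ range N, cnt N m : ℕ) : ZMod 5) := by
  rw [SS_eq, coeff_tsum' _ GAB_summable, tsum_eq_sum (s := range N)]
  · push_cast
    refine sum_congr rfl fun m hm => ?_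
    rw [mem_range] at hm
    rw [coeff_X_pow_mul', if_pos (by omega), coeff_mul, cnt]
    push_cast
    refine sum_congr rfl fun ij _ => ?_
    simp only [GA, GB, gfp, coeff_mk]
  · intro m hm
    rw [mem_range] at hm
    rw [coeff_X_pow_mul', if_neg (by omega)]

lemma sPart_cons (m : ℕ) (a : Multiset ℕ) (h : ∀ x ∈ a, m + 1 ≤ x) :
    sPart ((m + 1) ::ₘ a) = ((m + 1 : ℕ) : ℕ∞) := by
  have h0 : sPart ((m + 1) ::ₘ a) = (((m + 1) ::ₘ a).map (fun x : ℕ => (x : ℕ∞))).inf := by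
    simp [sPart]
  rw [h0, Multiset.map_cons, Multiset.inf_cons]
  apply inf_eq_left.mpr
  rw [Multiset.le_inf]
  intro b hb
  obtain ⟨x, hx, rfl⟩ := Multiset.mem_map.mp hb
  exact_mod_cast h x hx

lemma le_sPart (m : ℕ) (b : Multiset ℕ) : ((m : ℕ) : ℕ∞) ≤ sPart b ↔ ∀ x ∈ b, m ≤ x := by
  unfold sPart
  rw [Multiset.le_inf]
  simp

lemma lPart_lt (m : ℕ) (b : Multiset ℕ) : (lPart b : ℕ∞) < 2 * ((m + 1 : ℕ) : ℕ∞) ↔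
    ∀ x ∈ b, x < 2 * (m + 1) := by
  have h1 : (lPart b : ℕ∞) < 2 * ((m + 1 : ℕ) : ℕ∞) ↔ lPart b ≤ 2 * m + 1 := by
    rw [show (2 * ((m + 1 : ℕ) : ℕ∞)) = ((2 * (m + 1) : ℕ) : ℕ∞) by push_cast; rfl, Nat.cast_lt]
    omega
  rw [h1, lPart, Multiset.sup_le]
  exact forall₂_congr fun x _ => by omega

lemma exists_min (a : Multiset ℕ) (ha : a ≠ 0) : ∃ M ∈ a, ∀ x ∈ a, M ≤ x := by
  obtain ⟨y, hy⟩ := Multiset.exists_mem_of_ne_zero ha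
  obtain ⟨M, hM, h⟩ := Finset.exists_min_image a.toFinset id ⟨y, by simpa using hy⟩
  exact ⟨M, by simpa using hM, fun x hx => h x (by simpa using hx)⟩

lemma InST_iff (p : Multiset ℕ × Multiset ℕ) : InST p ↔ ∃ m a, p.1 = (m + 1) ::ₘ a ∧
    (∀ x ∈ a, m + 1 ≤ x) ∧ ∀ x ∈ p.2, m + 1 ≤ x ∧ x < 2 * (m + 1) := by
  constructor
  · rintro ⟨h1, h2, h3, h4, h5⟩
    obtain ⟨M, hM, hmin⟩ := exists_min p.1 h3
    obtain ⟨m, rfl⟩ : ∃ m, M = m + 1 := ⟨M - 1, by have := h1 M hM; omega⟩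
    obtain ⟨a, ha⟩ := Multiset.exists_cons_of_mem hM
    have hmin' : ∀ x ∈ a, m + 1 ≤ x := fun x hx => hmin x (by rw [ha]; simp [hx])
    rw [ha, sPart_cons m a hmin'] at h4 h5
    rw [le_sPart] at h4
    rw [lPart_lt] at h5
    exact ⟨m, a, ha, hmin', fun x hx => ⟨h4 x hx, h5 x hx⟩⟩
  · rintro ⟨m, a, ha, h1, h2⟩
    refine ⟨?_, ?_, ?_, ?_, ?_⟩
    · rw [ha]
      intro x hx
      rcases Multiset.mem_cons.mp hx with h | h
      · omega
      · have := h1 x h; omega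
    · intro x hx
      have := h2 x hx; omega
    · rw [ha]; exact Multiset.cons_ne_zero
    · rw [ha, sPart_cons m a h1, le_sPart]
      exact fun x hx => (h2 x hx).1
    · rw [ha, sPart_cons m a h1, lPart_lt]
      exact fun x hx => (h2 x hx).2

def emb (m : ℕ) {i j : ℕ} (q : Nat.Partition i × Nat.Partition j) : Multiset ℕ × Multiset ℕ :=
  ((m + 1) ::ₘ q.1.parts, q.2.parts)

lemma emb_inj (m i j : ℕ) : Function.Injective (emb m : Nat.Partition i × Nat.Partition j → _) := by
  rintro ⟨a, b⟩ ⟨c, d⟩ h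
  simp only [emb, Prod.mk.injEq, Multiset.cons_inj_right] at h
  exact Prod.ext (Nat.Partition.ext h.1) (Nat.Partition.ext h.2)

def FB (m : ℕ) (ij : ℕ × ℕ) : Finset (Multiset ℕ × Multiset ℕ) :=
  ((Nat.Partition.restricted ij.1 fun x => m + 1 ≤ x) ×ˢ
  (Nat.Partition.restricted ij.2 fun x => m + 1 ≤ x ∧ x < 2 * (m + 1))).image (emb m)

lemma mem_FB (m : ℕ) (ij : ℕ × ℕ) (p : Multiset ℕ × Multiset ℕ) : p ∈ FB m ij ↔
    ∃ a, p.1 = (m + 1) ::ₘ a ∧ (∀ x ∈ a, m + 1 ≤ x) ∧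
      (∀ x ∈ p.2, m + 1 ≤ x ∧ x < 2 * (m + 1)) ∧ a.sum = ij.1 ∧ p.2.sum = ij.2 := by
  simp only [FB, mem_image, mem_product, Nat.Partition.restricted, mem_filter, Finset.mem_univ,
    true_and, emb]
  constructor
  · rintro ⟨⟨a, b⟩, ⟨h1, h2⟩, rfl⟩
    exact ⟨a.parts, rfl, h1, h2, a.parts_sum, b.parts_sum⟩
  · rintro ⟨a, h, h1, h2, h3, h4⟩
    refine ⟨(⟨a, fun {x} hx => by have := h1 x hx; omega, h3⟩,
      ⟨p.2, fun {x} hx => by have := h2 x hx; omega, h4⟩), ⟨h1, h2⟩, ?_⟩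
    exact Prod.ext h.symm rfl

def FF (N : ℕ) : Finset (Multiset ℕ × Multiset ℕ) :=
  (range N).biUnion fun m => (antidiagonal (N - (m + 1))).biUnion fun ij => FB m ij

lemma mem_FF (N : ℕ) (p : Multiset ℕ × Multiset ℕ) :
    p ∈ FF N ↔ InST p ∧ p.1.sum + p.2.sum = N := by
  simp only [FF, mem_biUnion, mem_FB, InST_iff, mem_range, Finset.HasAntidiagonal.mem_antidiagonal]
  constructor
  · rintro ⟨m, hm, ij, hij, a, h, h1, h2, h3, h4⟩
    refine ⟨⟨m, a, h, h1, h2⟩, ?_⟩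
    rw [h, Multiset.sum_cons]
    omega
  · rintro ⟨⟨m, a, h, h1, h2⟩, hs⟩
    rw [h, Multiset.sum_cons] at hs
    exact ⟨m, by omega, (a.sum, p.2.sum), by simp only; omega, a, h, h1, h2, rfl, rfl⟩

lemma card_FF (N : ℕ) : #(FF N) = ∑ m ∈ range N, cnt N m := by
  unfold FF
  rw [card_biUnion]
  · refine sum_congr rfl fun m _ => ?_
    rw [card_biUnion, cnt]
    · refine sum_congr rfl fun ij _ => ?_
      rw [FB, card_image_of_injective _ (emb_inj m ij.1 ij.2), card_product]
    · intro ij hij kl hkl hne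
      change Disjoint (FB m ij) (FB m kl)
      rw [Finset.disjoint_left]
      intro p h1 h2
      obtain ⟨a, ha, -, -, h3, h4⟩ := (mem_FB _ _ _).mp h1
      obtain ⟨b, hb, -, -, h5, h6⟩ := (mem_FB _ _ _).mp h2
      have hab : a = b := (Multiset.cons_inj_right _).mp (ha.symm.trans hb)
      rw [hab] at h3
      exact hne (Prod.ext (h3.symm.trans h5) (h4.symm.trans h6))
  · intro m _ k _ hne
    simp only [Function.onFun]
    rw [Finset.disjoint_left]
    intro p h1 h2
    obtain ⟨ij, -, h1⟩ := mem_biUnion.mp h1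
    obtain ⟨kl, -, h2⟩ := mem_biUnion.mp h2
    obtain ⟨a, ha, h3, -⟩ := (mem_FB _ _ _).mp h1
    obtain ⟨b, hb, h4, -⟩ := (mem_FB _ _ _).mp h2
    have h5 := sPart_cons m a h3
    rw [← ha, hb, sPart_cons k b h4] at h5
    have h6 : k + 1 = m + 1 := by exact_mod_cast h5
    omega

lemma sT_eq (N : ℕ) : sT N = ∑ m ∈ range N, cnt N m := by
  rw [← card_FF, ← Set.ncard_coe_finset, sT]
  congr 1
  ext p
  simp [mem_FF]

end ST5

theorem sT_five_n_plus_four_mod_five (n : ℕ) : 5 ∣ sT (5 * n + 4) := by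
  rw [← ZMod.natCast_eq_zero_iff, ST5.sT_eq, ← ST5.coeff_SS_eq, ST5.coeff_SS]
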